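/- arXiv:0907.1020 — 3 statements merged into one kernel-verified Lean document; each statement's English description precedes it below -/
import Mathlib

section
/- Under Assumptions 1.1, 1.2 and 1.3, almost surely on Λ = {sup_{n≥0} ‖θ_n‖ < ∞} (with θ̂ = lim_n θ_n): ‖∇f(θ_n)‖² = o(γ_n^{−p}) and |f(θ_n) − f(θ̂)| = o(γ_n^{−p}) as n → ∞, where p = min{1, r}. -/
open MeasureTheory Filter Asymptotics

/-- Concavity-type inequality used in the Lojasiewicz argument. -/
lemma aux_concave {v w q : ℝ} (hw : 0 ≤ w) (hwv : w ≤ v) (hq0 : 0 < q) (hq1 : q < 1) :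
    (1 - q) * (v - w) ≤ v ^ q * (v ^ (1 - q) - w ^ (1 - q)) := by
  have hv : 0 ≤ v := hw.trans hwv
  have e1 : v ^ q * v ^ (1 - q) = v := by
    rw [← Real.rpow_add_of_nonneg hv hq0.le (by linarith)]; simp
  have h := Real.geom_mean_le_arith_mean2_weighted hq0.le (by linarith : 0 ≤ 1 - q) hv hw
    (by ring)
  rw [mul_sub, mul_sub, e1]
  linarith

/-- Finite length and rate under a Lojasiewicz inequality with errors. -/
lemma aux_B0 {c M μ : ℝ} (hc : 0 < c) (hM : 0 ≤ M) (hμ : 1 < μ) {v g e : ℕ → ℝ}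
    (hv : ∀ i, 0 ≤ v i) (hg : ∀ i, 0 ≤ g i) (he : ∀ i, 0 ≤ e i)
    (hdec : ∀ i, c * g i ^ 2 ≤ v i - v (i + 1))
    (hloj : ∀ i, v i ≤ e i + M * g i ^ μ)
    (hes : Summable fun i => e i ^ (1 / μ)) :
    Summable g ∧ Tendsto (fun i : ℕ => (i : ℝ) * v i) atTop (nhds 0) := by
  have hμ0 : 0 < μ := by linarith
  set q := 1 / μ with hq
  have hq0 : 0 < q := by positivity
  have hq1 : q < 1 := by rw [hq, div_lt_one hμ0]; exact hμ
  have hq2 : 0 < 1 - q := by linarith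
  have hanti : Antitone v := antitone_nat_of_succ_le fun i => by
    nlinarith [hdec i, sq_nonneg (g i)]
  set N := M ^ q with hN
  have hN0 : 0 ≤ N := Real.rpow_nonneg hM _
  have hvq : ∀ i, v i ^ q ≤ e i ^ q + N * g i := fun i => by
    have h1 : v i ^ q ≤ (e i + M * g i ^ μ) ^ q := Real.rpow_le_rpow (hv i) (hloj i) hq0.le
    have hgm : 0 ≤ g i ^ μ := Real.rpow_nonneg (hg i) _
    have h2 : (e i + M * g i ^ μ) ^ q ≤ e i ^ q + (M * g i ^ μ) ^ q :=
      Real.rpow_add_le_add_rpow (he i) (mul_nonneg hM hgm) hq0.le hq1.le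
    have h3 : (M * g i ^ μ) ^ q = N * g i := by
      rw [Real.mul_rpow hM hgm, ← Real.rpow_mul (hg i), hq, mul_one_div_cancel hμ0.ne',
        Real.rpow_one]
    linarith
  set φ := fun i => v i ^ (1 - q) with hφ
  have hφanti : ∀ i, φ (i + 1) ≤ φ i := fun i =>
    Real.rpow_le_rpow (hv _) (hanti (Nat.le_succ i)) (by linarith)
  have hφ0 : ∀ i, 0 ≤ φ i := fun i => Real.rpow_nonneg (hv i) _
  have hΔ : Summable fun i => φ i - φ (i + 1) := by
    refine summable_of_sum_range_le (c := φ 0) (fun i => by linarith [hφanti i]) fun n => ?_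
    rw [Finset.sum_range_sub']
    linarith [hφ0 n]
  have hgb : ∀ i, g i ≤ (1 + N) / (c * (1 - q)) * (φ i - φ (i + 1)) + e i ^ q := fun i => by
    have h1 := hdec i
    have h2 : (1 - q) * (v i - v (i+1)) ≤ v i ^ q * (φ i - φ (i+1)) :=
      aux_concave (hv _) (hanti (Nat.le_succ i)) hq0 hq1
    have h3 := hvq i
    have hD : 0 ≤ φ i - φ (i+1) := by linarith [hφanti i]
    have hE : 0 ≤ e i ^ q := Real.rpow_nonneg (he i) _
    rcases le_total (g i) (e i ^ q) with h | h
    · have : 0 ≤ (1 + N) / (c * (1 - q)) * (φ i - φ (i + 1)) := by positivity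
      linarith
    · rcases (hg i).eq_or_lt with h0 | h0
      · rw [← h0]; positivity
      · have h4 : v i ^ q * (φ i - φ (i+1)) ≤ ((1 + N) * g i) * (φ i - φ (i+1)) := by
          gcongr; linarith
        have h5 : g i * (c * (1 - q) * g i) ≤ g i * ((1 + N) * (φ i - φ (i+1))) := by
          have := mul_le_mul_of_nonneg_left h1 hq2.le
          nlinarith
        have h6 := le_of_mul_le_mul_left h5 h0
        have h7 : g i ≤ (1 + N) / (c * (1 - q)) * (φ i - φ (i + 1)) := by
          rw [div_mul_eq_mul_div, le_div_iff₀ (mul_pos hc hq2)]; linarith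
        linarith
  have hgs : Summable g :=
    Summable.of_nonneg_of_le hg hgb ((hΔ.mul_left _).add hes)
  refine ⟨hgs, ?_⟩
  have hvs : Summable fun i => v i ^ q :=
    Summable.of_nonneg_of_le (fun i => Real.rpow_nonneg (hv i) _) hvq (hes.add (hgs.mul_left N))
  set S := ∑' i, v i ^ q with hS
  have hS0 : 0 ≤ S := tsum_nonneg fun i => Real.rpow_nonneg (hv i) _
  have hb : ∀ i : ℕ, (i : ℝ) * v i ^ q ≤ S := fun i => by
    calc (i : ℝ) * v i ^ q = ∑ j ∈ Finset.range i, v i ^ q := by simp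
      _ ≤ ∑ j ∈ Finset.range i, v j ^ q := Finset.sum_le_sum fun j hj =>
          Real.rpow_le_rpow (hv _) (hanti (Finset.mem_range.1 hj).le) hq0.le
      _ ≤ S := hvs.sum_le_tsum _ fun j _ => Real.rpow_nonneg (hv j) _
  have hlim : Tendsto (fun i : ℕ => S ^ μ * (i : ℝ) ^ (-(μ - 1))) atTop (nhds 0) := by
    have := ((tendsto_rpow_neg_atTop (by linarith : 0 < μ - 1)).comp
      tendsto_natCast_atTop_atTop).const_mul (S ^ μ)
    simpa using this
  refine squeeze_zero' (Eventually.of_forall fun i => mul_nonneg (Nat.cast_nonneg i) (hv i)) ?_ hlim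
  filter_upwards [eventually_gt_atTop 0] with i hi
  have hi' : (0 : ℝ) < i := by exact_mod_cast hi
  have h1 : v i ^ q ≤ S / i := by rw [le_div_iff₀ hi']; linarith [hb i]
  have h2 : (v i ^ q) ^ μ ≤ (S / i) ^ μ := Real.rpow_le_rpow (Real.rpow_nonneg (hv i) _) h1 hμ0.le
  rw [← Real.rpow_mul (hv i), hq, one_div_mul_cancel hμ0.ne', Real.rpow_one,
    Real.div_rpow hS0 hi'.le] at h2
  calc (i : ℝ) * v i ≤ i * (S ^ μ / i ^ μ) := by gcongr
    _ = S ^ μ * (i : ℝ) ^ (-(μ - 1)) := by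
      rw [show -(μ - 1) = 1 - μ by ring, Real.rpow_sub hi', Real.rpow_one]; ring

/-- Telescoping bound for `k^{-2r}`. -/
lemma aux_tele {r : ℝ} (hr : 1 < r) {k : ℕ} (hk : 1 ≤ k) :
    (k : ℝ) ^ (-(2 * r)) ≤ 2 * (k : ℝ) ^ (-(2 * r - 1)) - 2 * ((k + 1 : ℕ) : ℝ) ^ (-(2 * r - 1)) := by
  have hk' : (1 : ℝ) ≤ k := by exact_mod_cast hk
  have hk0 : (0 : ℝ) < k := by linarith
  push_cast
  set s := 2 * r - 1 with hs
  have hs1 : 1 < s := by linarith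
  have e1 : (k : ℝ) ^ (-(2 * r)) = (k : ℝ) ^ (-s) / k := by
    rw [show -(2 * r) = -s - 1 by rw [hs]; ring, Real.rpow_sub hk0, Real.rpow_one]
  have hA : 0 < (k : ℝ) ^ (-s) := Real.rpow_pos_of_pos hk0 _
  have h2 : ((k : ℝ) + 1) ^ (-s) ≤ (k : ℝ) ^ (-s) * (k / (k + 1)) := by
    have h3 : ((k : ℝ) + 1) ^ (-s) = (k : ℝ) ^ (-s) * ((k / (k + 1) : ℝ)) ^ s := by
      rw [Real.div_rpow hk0.le (by linarith), Real.rpow_neg hk0.le, Real.rpow_neg (by linarith)]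
      have : (k : ℝ) ^ s ≠ 0 := (Real.rpow_pos_of_pos hk0 _).ne'
      field_simp
    rw [h3]
    gcongr
    have h4 : (k / (k + 1) : ℝ) ≤ 1 := by rw [div_le_one (by linarith)]; linarith
    have := Real.rpow_le_rpow_of_exponent_ge (by positivity : (0:ℝ) < k / (k + 1)) h4 hs1.le
    simpa using this
  rw [e1]
  have h5 : (k : ℝ) ^ (-s) / k ≤ 2 * ((k : ℝ) ^ (-s) * (1 / (k + 1))) := by
    rw [div_eq_mul_one_div, mul_left_comm]
    gcongr
    rw [mul_one_div, div_le_div_iff₀ hk0 (by linarith)]; linarith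
  have h6 : (k : ℝ) ^ (-s) * (k / (k + 1)) = (k : ℝ) ^ (-s) - (k : ℝ) ^ (-s) * (1 / (k + 1)) := by
    field_simp; ring
  linarith

lemma aux_rpow0 {s : ℝ} (hs : 0 < s) : Tendsto (fun k : ℕ => (k : ℝ) ^ (-s)) atTop (nhds 0) :=
  (tendsto_rpow_neg_atTop hs).comp tendsto_natCast_atTop_atTop

/-- Convergence of function values. -/
lemma aux_A {c C r B : ℝ} (hc : 0 < c) (hC : 0 ≤ C) (hr : 1 < r) {F g : ℕ → ℝ}
    (hB : ∀ k, B ≤ F k)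
    (hdec : ∀ᶠ k : ℕ in atTop, F (k + 1) ≤ F k - c * g k ^ 2 + C * (k : ℝ) ^ (-(2 * r))) :
    ∃ b, Tendsto F atTop (nhds b) ∧ ∀ᶠ k : ℕ in atTop,
      b ≤ F k + 2 * C * (k : ℝ) ^ (-(2 * r - 1)) := by
  obtain ⟨k0, hk0⟩ := eventually_atTop.1 hdec
  set E := fun k : ℕ => 2 * C * (k : ℝ) ^ (-(2 * r - 1)) with hE
  have hE0 : Tendsto E atTop (nhds 0) := by
    have := (aux_rpow0 (by linarith : 0 < 2 * r - 1)).const_mul (2 * C)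
    rwa [mul_zero] at this
  set u := fun i : ℕ => F (i + (k0 + 1)) + E (i + (k0 + 1)) with hu
  have hanti : Antitone u := antitone_nat_of_succ_le fun i => by
    have h1 := hk0 (i + (k0 + 1)) (by omega)
    have h2 := mul_le_mul_of_nonneg_left (aux_tele hr (k := i + (k0 + 1)) (by omega)) hC
    simp only [hu, hE]
    rw [show i + 1 + (k0 + 1) = i + (k0 + 1) + 1 by omega]
    nlinarith [sq_nonneg (g (i + (k0 + 1)))]
  have hEn : ∀ k, 0 ≤ E k := fun k => by simp only [hE]; positivity
  have hbd : BddBelow (Set.range u) := ⟨B, by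
    rintro _ ⟨i, rfl⟩
    exact (hB _).trans (by simp only [hu]; linarith [hEn (i + (k0 + 1))])⟩
  have ht := tendsto_atTop_ciInf hanti hbd
  refine ⟨⨅ i, u i, ?_, ?_⟩
  · have h1 : Tendsto (fun k => F k + E k) atTop (nhds (⨅ i, u i)) :=
      (tendsto_add_atTop_iff_nat (f := fun k => F k + E k) (k0 + 1)).1 ht
    simpa using h1.sub hE0
  · filter_upwards [eventually_ge_atTop (k0 + 1)] with k hk
    have := ciInf_le hbd (k - (k0 + 1))
    simp only [hu, Nat.sub_add_cancel hk] at this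
    exact this

/-- Summability and rates. -/
lemma aux_B {c C r b M μ : ℝ} (hc : 0 < c) (hC : 0 ≤ C) (hr : 1 < r) (hM : 0 ≤ M) (hμ : 1 < μ)
    {F g : ℕ → ℝ} (hg : ∀ k, 0 ≤ g k)
    (hF : Tendsto F atTop (nhds b))
    (hFb : ∀ᶠ k : ℕ in atTop, b ≤ F k + 2 * C * (k : ℝ) ^ (-(2 * r - 1)))
    (hdec : ∀ᶠ k : ℕ in atTop, F (k + 1) ≤ F k - c * g k ^ 2 + C * (k : ℝ) ^ (-(2 * r)))
    (hloj : ∀ᶠ k in atTop, |F k - b| ≤ M * g k ^ μ) :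
    Summable g ∧ Tendsto (fun k : ℕ => (k : ℝ) * |F k - b|) atTop (nhds 0) ∧
      Tendsto (fun k : ℕ => (k : ℝ) * g k ^ 2) atTop (nhds 0) := by
  set E := fun k : ℕ => 2 * C * (k : ℝ) ^ (-(2 * r - 1)) with hE
  have hE0 : Tendsto E atTop (nhds 0) := by
    have := (aux_rpow0 (by linarith : 0 < 2 * r - 1)).const_mul (2 * C)
    rwa [mul_zero] at this
  have hEn : ∀ k, 0 ≤ E k := fun k => by simp only [hE]; positivity
  set v := fun k => F k + E k - b with hv
  have hv0 : Tendsto v atTop (nhds 0) := by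
    simpa using (hF.add hE0).sub_const b
  have hvn : ∀ᶠ k in atTop, 0 ≤ v k := by
    filter_upwards [hFb] with k hk
    simp only [hv, hE]; linarith
  have hvd : ∀ᶠ k in atTop, c * g k ^ 2 ≤ v k - v (k + 1) := by
    filter_upwards [hdec, eventually_ge_atTop 1] with k hk hk1
    have h2 := mul_le_mul_of_nonneg_left (aux_tele hr hk1) hC
    simp only [hv, hE]
    linarith
  have hgv : ∀ᶠ k in atTop, c * g k ^ 2 ≤ v k := by
    filter_upwards [hvd, (tendsto_add_atTop_nat 1).eventually hvn] with k h1 h2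
    linarith
  have hg1 : ∀ᶠ k in atTop, g k ≤ 1 := by
    filter_upwards [hgv, hv0.eventually (gt_mem_nhds hc)] with k h1 h2
    have h3 : g k ^ 2 < 1 := by
      by_contra! h
      nlinarith
    nlinarith [hg k]
  set ν := min μ r with hν
  have hν1 : 1 < ν := lt_min hμ hr
  have hνr : ν ≤ r := min_le_right _ _
  have hloj' : ∀ᶠ k in atTop, v k ≤ E k + M * g k ^ ν := by
    filter_upwards [hloj, hg1] with k h1 h2
    have h3 : g k ^ μ ≤ g k ^ ν :=
      Real.rpow_le_rpow_of_exponent_ge_of_imp (hg k) h2 (min_le_left _ _) (by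
        intro _ h; linarith)
    have := mul_le_mul_of_nonneg_left h3 hM
    simp only [hv]; linarith [le_abs_self (F k - b)]
  obtain ⟨k0, hk0⟩ := eventually_atTop.1 (hvn.and (hvd.and hloj'))
  have hes : Summable fun k => E k ^ (1 / ν) := by
    have : ∀ k : ℕ, E k ^ (1 / ν) = (2 * C) ^ (1 / ν) * (k : ℝ) ^ (-((2 * r - 1) / ν)) := fun k => by
      simp only [hE]
      rw [Real.mul_rpow (by positivity) (by positivity), ← Real.rpow_mul (by positivity)]
      congr 2; ring
    simp_rw [this]
    refine Summable.mul_left _ (Real.summable_nat_rpow.2 ?_)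
    rw [neg_lt_neg_iff, lt_div_iff₀ (by linarith)]; linarith
  have key := aux_B0 hc hM hν1 (v := fun i => v (i + k0)) (g := fun i => g (i + k0))
    (e := fun i => E (i + k0)) (fun i => (hk0 _ (by omega)).1) (fun i => hg _) (fun i => hEn _)
    (fun i => by have := (hk0 (i + k0) (by omega)).2.1; rwa [add_right_comm] at this)
    (fun i => (hk0 _ (by omega)).2.2) ((summable_nat_add_iff k0).2 hes)
  have hkv : Tendsto (fun k : ℕ => (k : ℝ) * v k) atTop (nhds 0) := by
    refine (tendsto_add_atTop_iff_nat k0).1 ?_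
    have h1 := key.2.add (((tendsto_add_atTop_iff_nat k0).2 hv0).const_mul (k0 : ℝ))
    simp only [mul_zero, add_zero] at h1
    refine h1.congr fun i => ?_
    push_cast; ring
  have hkE : Tendsto (fun k : ℕ => (k : ℝ) * E k) atTop (nhds 0) := by
    have h1 : Tendsto (fun k : ℕ => 2 * C * (k : ℝ) ^ (-(2 * r - 2))) atTop (nhds 0) := by
      have := (aux_rpow0 (by linarith : 0 < 2 * r - 2)).const_mul (2 * C)
      rwa [mul_zero] at this
    refine h1.congr' ?_
    filter_upwards [eventually_gt_atTop 0] with k hk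
    have hk' : (0 : ℝ) < k := by exact_mod_cast hk
    simp only [hE]
    rw [show -(2 * r - 2) = -(2 * r - 1) + 1 by ring, Real.rpow_add hk', Real.rpow_one]; ring
  refine ⟨(summable_nat_add_iff k0).1 key.1, ?_, ?_⟩
  · have h1 := hkv.add hkE
    simp only [add_zero] at h1
    refine squeeze_zero' (Eventually.of_forall fun k => by positivity) ?_ h1
    filter_upwards [hvn] with k hk
    rw [← mul_add]
    gcongr
    rw [abs_le]
    have h3 := hEn k
    simp only [hv] at hk ⊢
    constructor <;> linarith
  · have h1 := hkv.const_mul (1 / c)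
    simp only [mul_zero] at h1
    refine squeeze_zero' (Eventually.of_forall fun k => by positivity) ?_ h1
    filter_upwards [hgv] with k hk
    have : g k ^ 2 ≤ 1 / c * v k := by
      rw [one_div_mul_eq_div, le_div_iff₀ hc]; linarith
    calc (k : ℝ) * g k ^ 2 ≤ k * (1 / c * v k) := by gcongr
      _ = _ := by ring

/-- Abel summation bound with nonincreasing weights. -/
lemma aux_abel {E : Type*} [NormedAddCommGroup E] [NormedSpace ℝ E] {c : ℕ → ℝ} {b : ℕ → E}
    {m : ℕ} {K : ℝ} (hc0 : ∀ i, m ≤ i → 0 ≤ c i) (hanti : ∀ i, m ≤ i → c (i + 1) ≤ c i)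
    {n : ℕ} (hmn : m ≤ n)
    (hB : ∀ k, m ≤ k → k ≤ n → ‖∑ i ∈ Finset.Icc m k, b i‖ ≤ K) :
    ‖∑ i ∈ Finset.Icc m n, c i • b i‖ ≤ c m * K := by
  have key : ∀ n, m ≤ n → (∀ k, m ≤ k → k ≤ n → ‖∑ i ∈ Finset.Icc m k, b i‖ ≤ K) →
      ‖∑ i ∈ Finset.Icc m n, c i • b i - c n • ∑ i ∈ Finset.Icc m n, b i‖ ≤ (c m - c n) * K := by
    intro n hmn
    induction n, hmn using Nat.le_induction with
    | base => intro _; simp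
    | succ n hmn ih =>
      intro hB
      have h1 := ih fun k hk hkn => hB k hk (by omega)
      have h2 := hB n hmn (by omega)
      have e : ∑ i ∈ Finset.Icc m (n + 1), c i • b i - c (n + 1) • ∑ i ∈ Finset.Icc m (n + 1), b i
          = (∑ i ∈ Finset.Icc m n, c i • b i - c n • ∑ i ∈ Finset.Icc m n, b i)
            + (c n - c (n + 1)) • ∑ i ∈ Finset.Icc m n, b i := by
        rw [Finset.sum_Icc_succ_top (by omega), Finset.sum_Icc_succ_top (by omega)]
        rw [smul_add, sub_smul]; abel
      rw [e]
      have h3 : 0 ≤ c n - c (n + 1) := by linarith [hanti n hmn]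
      refine (norm_add_le _ _).trans ?_
      rw [norm_smul, Real.norm_of_nonneg h3]
      nlinarith [mul_le_mul_of_nonneg_left h2 h3]
  have h1 := key n hmn hB
  have h2 := hB n hmn le_rfl
  have h3 := hc0 n hmn
  have e : ∑ i ∈ Finset.Icc m n, c i • b i =
      (∑ i ∈ Finset.Icc m n, c i • b i - c n • ∑ i ∈ Finset.Icc m n, b i)
        + c n • ∑ i ∈ Finset.Icc m n, b i := by abel
  rw [e]
  refine (norm_add_le _ _).trans ?_
  rw [norm_smul, Real.norm_of_nonneg h3]
  nlinarith [mul_le_mul_of_nonneg_left h2 h3]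

/-- First order expansion with a quadratic error. -/
lemma aux_descent {E : Type*} [NormedAddCommGroup E] [InnerProductSpace ℝ E] [CompleteSpace E]
    {f : E → ℝ} (hfd : Differentiable ℝ f) {Q : Set E} (hQ : Convex ℝ Q) {L : ℝ} (hL0 : 0 ≤ L)
    (hL : ∀ x ∈ Q, ∀ y ∈ Q, ‖gradient f x - gradient f y‖ ≤ L * ‖x - y‖)
    {x y : E} (hx : x ∈ Q) (hy : y ∈ Q) :
    |f y - f x - inner ℝ (gradient f x) (y - x)| ≤ L * ‖y - x‖ ^ 2 := by
  have h := (convex_segment (𝕜 := ℝ) x y).norm_image_sub_le_of_norm_fderiv_le' (𝕜 := ℝ) (f := f)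
    (φ := fderiv ℝ f x) (C := L * ‖y - x‖) (x := x) (y := y) (fun z _ => hfd z) (fun z hz => by
      have hzQ : z ∈ Q := hQ.segment_subset hx hy hz
      rw [← toDual_gradient, ← toDual_gradient, ← map_sub, LinearIsometryEquiv.norm_map]
      refine (hL z hzQ x hx).trans ?_
      gcongr
      obtain ⟨t, ⟨h0, h1⟩, rfl⟩ := (segment_eq_image' ℝ x y ▸ hz)
      rw [add_sub_cancel_left, norm_smul, Real.norm_of_nonneg h0]
      nlinarith [norm_nonneg (y - x)]) (left_mem_segment ℝ x y) (right_mem_segment ℝ x y)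
  rw [Real.norm_eq_abs, ← inner_gradient_left] at h
  calc _ ≤ L * ‖y - x‖ * ‖y - x‖ := h
    _ = _ := by ring

/-- Estimates over one block. -/
lemma aux_block {E : Type*} [NormedAddCommGroup E] [NormedSpace ℝ E]
    {α γ : ℕ → ℝ} (hα : ∀ n, 0 < α n) (hγ : ∀ n, γ n = ∑ i ∈ Finset.range n, α i)
    {θ ξ G : ℕ → E} (hrec : ∀ n, θ (n + 1) = θ n - α n • (G n + ξ n))
    {L T ε : ℝ} (hL0 : 0 ≤ L) (hT : 0 ≤ T) (hLT : 4 * L * T ≤ 1) (hT1 : 2 * T ≤ 1) (hε : 0 ≤ ε)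
    (hL : ∀ i j, ‖G i - G j‖ ≤ L * ‖θ i - θ j‖) {m : ℕ}
    (hnoise : ∀ n, m ≤ n → γ n - γ m ≤ 1 → ‖∑ i ∈ Finset.Ico m n, α i • ξ i‖ ≤ ε) :
    ∀ n, m ≤ n → γ n - γ m ≤ 2 * T →
      ‖θ n - θ m‖ ≤ 2 * (2 * T * ‖G m‖ + ε) ∧
      ‖θ n - θ m + (γ n - γ m) • G m‖ ≤ ε + 4 * L * T * (2 * T * ‖G m‖ + ε) := by
  intro n
  induction n using Nat.strong_induction_on with
  | _ n ih =>
  intro hmn hn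
  have hsum : ∀ n, m ≤ n → ∑ i ∈ Finset.Ico m n, α i = γ n - γ m := fun n h => by
    rw [Finset.sum_Ico_eq_sub _ h, hγ, hγ]
  have hD : θ n - θ m + (γ n - γ m) • G m =
      - ∑ i ∈ Finset.Ico m n, α i • (G i - G m) - ∑ i ∈ Finset.Ico m n, α i • ξ i := by
    have h1 : θ n - θ m = - ∑ i ∈ Finset.Ico m n, α i • (G i + ξ i) := by
      rw [← Finset.sum_Ico_sub θ hmn, ← Finset.sum_neg_distrib]
      refine Finset.sum_congr rfl fun i _ => ?_
      rw [hrec]; abel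
    rw [h1, ← hsum n hmn, Finset.sum_smul]
    simp only [smul_add, smul_sub, Finset.sum_add_distrib, Finset.sum_sub_distrib]
    abel
  have hmono : Monotone γ := monotone_nat_of_le_succ fun k => by
    rw [hγ, hγ, Finset.sum_range_succ]; linarith [hα k]
  set R := 2 * T * ‖G m‖ + ε with hR
  have hR0 : 0 ≤ R := by positivity
  have h2 : ‖θ n - θ m + (γ n - γ m) • G m‖ ≤ ε + 4 * L * T * R := by
    rw [hD]
    have h3 : ‖∑ i ∈ Finset.Ico m n, α i • (G i - G m)‖ ≤ 4 * L * T * R := by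
      calc _ ≤ ∑ i ∈ Finset.Ico m n, α i * (L * (2 * R)) := by
            refine norm_sum_le_of_le _ fun i hi => ?_
            rw [Finset.mem_Ico] at hi
            rw [norm_smul, Real.norm_of_nonneg (hα i).le]
            have h4 := (ih i hi.2 hi.1 (by linarith [hmono hi.2.le])).1
            have h5 := hL i m
            have := (hα i).le
            gcongr
            exact h5.trans (by gcongr)
        _ = (γ n - γ m) * (L * (2 * R)) := by rw [← Finset.sum_mul, hsum n hmn]
        _ ≤ 2 * T * (L * (2 * R)) := by gcongr
        _ = _ := by ring
    have h6 := hnoise n hmn (by linarith)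
    calc _ ≤ ‖- ∑ i ∈ Finset.Ico m n, α i • (G i - G m)‖ + ‖∑ i ∈ Finset.Ico m n, α i • ξ i‖ :=
          norm_sub_le _ _
      _ ≤ _ := by rw [norm_neg]; linarith
  refine ⟨?_, h2⟩
  have h7 : θ n - θ m = (θ n - θ m + (γ n - γ m) • G m) - (γ n - γ m) • G m := by abel
  have h8 : ‖(γ n - γ m) • G m‖ ≤ 2 * T * ‖G m‖ := by
    rw [norm_smul, Real.norm_of_nonneg (by linarith [hmono hmn])]
    gcongr
  rw [h7]
  refine (norm_sub_le _ _).trans ?_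
  nlinarith

/-- The descent inequality over one block, in scalar form. -/
lemma aux_scalar {L T ε g τ p D Δ : ℝ} (hL : 1 ≤ L) (hT : T = 1 / (160 * L)) (hg : 0 ≤ g)
    (hε : 0 ≤ ε) (hτ : T / 2 ≤ τ) (hD0 : 0 ≤ D)
    (hD : D ≤ 2 * (2 * T * g + ε))
    (hp : p ≤ - τ * g ^ 2 + g * (ε + 4 * L * T * (2 * T * g + ε)))
    (hΔ : Δ ≤ p + L * D ^ 2) :
    Δ ≤ - (T / 8) * g ^ 2 + (8 / T + 8 * L) * ε ^ 2 := by
  have hL0 : 0 < L := by linarith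
  have hT0 : 0 < T := by rw [hT]; positivity
  have hLT : L * T = 1 / 160 := by rw [hT]; field_simp
  have h1 : D ^ 2 ≤ (2 * (2 * T * g + ε)) ^ 2 := by gcongr
  have h2 : L * D ^ 2 ≤ L * (2 * (2 * T * g + ε)) ^ 2 := by gcongr
  have h3 : L * (2 * (2 * T * g + ε)) ^ 2 ≤ 32 * (L * T) * T * g ^ 2 + 8 * L * ε ^ 2 := by
    nlinarith [mul_nonneg hL0.le (sq_nonneg (2 * T * g - ε))]
  have h4 : g * (ε + 4 * L * T * (2 * T * g + ε)) =
      g * ε * (1 + 4 * (L * T)) + 8 * (L * T) * T * g ^ 2 := by ring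
  rw [h4, hLT] at hp
  rw [hLT] at h3
  have h5 : T / 2 * g ^ 2 ≤ τ * g ^ 2 := by gcongr
  have h6 : 2 * (g * ε) ≤ T / 8 * g ^ 2 + 8 / T * ε ^ 2 := by
    have : T / 8 * g ^ 2 + 8 / T * ε ^ 2 - 2 * (g * ε) = 8 / T * (T / 8 * g - ε) ^ 2 := by
      field_simp; ring
    have h7 : 0 ≤ 8 / T * (T / 8 * g - ε) ^ 2 := by positivity
    linarith
  have h8 : 0 ≤ g * ε := by positivity
  have h9 : 0 ≤ T * g ^ 2 := by positivity
  rw [add_mul]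
  nlinarith

set_option maxHeartbeats 1600000 in
/-- The deterministic core of the theorem. -/
theorem aux_det {E : Type*} [NormedAddCommGroup E] [InnerProductSpace ℝ E] [CompleteSpace E]
    [ProperSpace E]
    (f : E → ℝ) (hfd : Differentiable ℝ f) (hlip : LocallyLipschitz (fun x => gradient f x))
    (α : ℕ → ℝ) (hαpos : ∀ n, 0 < α n) (θ ξ : ℕ → E)
    (hrec : ∀ n, θ (n + 1) = θ n - α n • (gradient f (θ n) + ξ n))
    (hα0 : Tendsto α atTop (nhds 0))
    (γ : ℕ → ℝ) (hγ : ∀ n, γ n = ∑ i ∈ Finset.range n, α i)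
    (hαdiv : Tendsto γ atTop atTop)
    (r : ℝ) (hr : 1 < r) {B : ℝ} (hB : ∀ n, ‖θ n‖ ≤ B) {K : ℝ} (hK : 0 ≤ K)
    (hnoise : ∀ᶠ m in atTop, ∀ n, m ≤ n → γ n - γ m ≤ 1 →
      ‖∑ i ∈ Finset.Ico m n, α i • ξ i‖ ≤ K * γ m ^ (-r))
    (hLoj : ∀ Q : Set E, IsCompact Q → ∀ b ∈ f '' Q,
      ∃ δ μ M : ℝ, δ ∈ Set.Ioc (0 : ℝ) 1 ∧ μ ∈ Set.Ioc (1 : ℝ) 2 ∧ 1 ≤ M ∧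
        ∀ x ∈ Q, |f x - b| ≤ δ → |f x - b| ≤ M * ‖gradient f x‖ ^ μ) :
    ∃ θhat, Tendsto θ atTop (nhds θhat) ∧
      Tendsto (fun n => γ n * ‖gradient f (θ n)‖ ^ 2) atTop (nhds 0) ∧
      Tendsto (fun n => γ n * |f (θ n) - f θhat|) atTop (nhds 0) := by
  set Q : Set E := Metric.closedBall 0 B with hQ
  have hQc : IsCompact Q := isCompact_closedBall 0 B
  have hQconv : Convex ℝ Q := convex_closedBall 0 B
  have hθQ : ∀ n, θ n ∈ Q := fun n => by simpa [hQ] using hB n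
  obtain ⟨K', hK'⟩ := LocallyLipschitzOn.exists_lipschitzOnWith_of_compact hQc
    (hlip.locallyLipschitzOn (s := Q))
  set L : ℝ := max K' 1 with hLdef
  have hL1 : 1 ≤ L := le_max_right _ _
  have hL0 : 0 < L := by linarith
  have hLip : ∀ x ∈ Q, ∀ y ∈ Q, ‖gradient f x - gradient f y‖ ≤ L * ‖x - y‖ := by
    intro x hx y hy
    have h := hK'.dist_le_mul x hx y hy
    rw [dist_eq_norm, dist_eq_norm] at h
    exact h.trans (by gcongr; exact le_max_left _ _)
  set G : ℕ → E := fun n => gradient f (θ n) with hG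
  have hGL : ∀ i j, ‖G i - G j‖ ≤ L * ‖θ i - θ j‖ := fun i j => hLip _ (hθQ i) _ (hθQ j)
  obtain ⟨T, hT⟩ : ∃ T, T = 1 / (160 * L) := ⟨_, rfl⟩
  have hT0 : 0 < T := by rw [hT]; positivity
  have hLT : L * T = 1 / 160 := by rw [hT]; field_simp
  have hT1 : 2 * T ≤ 1 := by nlinarith
  have hmono : Monotone γ := monotone_nat_of_le_succ fun k => by
    rw [hγ, hγ, Finset.sum_range_succ]; linarith [hαpos k]
  -- block endpoints
  have hex : ∀ k : ℕ, ∃ n, (k : ℝ) * T ≤ γ n := fun k =>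
    (hαdiv.eventually (eventually_ge_atTop _)).exists
  classical
  obtain ⟨m, hm1, hm2⟩ : ∃ m : ℕ → ℕ, (∀ k : ℕ, (k : ℝ) * T ≤ γ (m k)) ∧
      ∀ k n : ℕ, (k : ℝ) * T ≤ γ n → m k ≤ n :=
    ⟨fun k => Nat.find (hex k), fun k => Nat.find_spec (hex k), fun k n h => Nat.find_min' (hex k) h⟩
  have hkT : Tendsto (fun k : ℕ => (k : ℝ) * T) atTop atTop :=
    tendsto_natCast_atTop_atTop.atTop_mul_const hT0
  have hm : Tendsto m atTop atTop := by
    refine tendsto_atTop.2 fun N => ?_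
    filter_upwards [hkT.eventually (eventually_gt_atTop (γ N))] with k hk
    by_contra! h
    linarith [hm1 k, hmono h.le]
  have hmup : ∀ᶠ k : ℕ in atTop, γ (m k) ≤ k * T + T / 2 := by
    obtain ⟨N0, hN0⟩ := eventually_atTop.1 (hα0.eventually (gt_mem_nhds (half_pos hT0)))
    filter_upwards [hm.eventually (eventually_ge_atTop (N0 + 1))] with k hk
    obtain ⟨j, hj⟩ : ∃ j, m k = j + 1 := ⟨m k - 1, by omega⟩
    have h1 : γ j < k * T := by
      by_contra! h
      have := hm2 k j h
      omega
    have h2 := hN0 j (by omega)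
    rw [hj, hγ, Finset.sum_range_succ, ← hγ]
    linarith
  have hmm : ∀ k, m k ≤ m (k + 1) := fun k => hm2 _ _ (by
    have := hm1 (k + 1); push_cast at this; linarith)
  set ε : ℕ → ℝ := fun k => K * T ^ (-r) * (k : ℝ) ^ (-r) with hε
  have hε0 : ∀ k, 0 ≤ ε k := fun k => by simp only [hε]; positivity
  set g : ℕ → ℝ := fun k => ‖G (m k)‖ with hg
  have hg0 : ∀ k, 0 ≤ g k := fun k => norm_nonneg _
  have hblk : ∀ᶠ k in atTop, ∀ n, m k ≤ n → n ≤ m (k + 1) →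
      ‖θ n - θ (m k)‖ ≤ 2 * (2 * T * g k + ε k) ∧
      ‖θ n - θ (m k) + (γ n - γ (m k)) • G (m k)‖ ≤
        ε k + 4 * L * T * (2 * T * g k + ε k) := by
    filter_upwards [hmup, (tendsto_add_atTop_nat 1).eventually hmup, hm.eventually hnoise,
      eventually_gt_atTop 0] with k h1 h2 h3 h4 n hn1 hn2
    have hk' : (0 : ℝ) < k := by exact_mod_cast h4
    have hεk : K * γ (m k) ^ (-r) ≤ ε k := by
      simp only [hε]
      rw [mul_assoc, ← Real.mul_rpow hT0.le hk'.le, mul_comm T]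
      refine mul_le_mul_of_nonneg_left ?_ hK
      exact Real.rpow_le_rpow_of_nonpos (by positivity) (hm1 k)
        (neg_nonpos.2 (zero_lt_one.trans hr).le)
    have h4LT : 4 * L * T ≤ 1 := by nlinarith
    refine aux_block hαpos hγ hrec hL0.le hT0.le h4LT hT1 (hε0 k) hGL
      (fun n hn hn' => (h3 n hn hn').trans hεk) n hn1 ?_
    have h5 := hmono hn2
    have h6 := hm1 k
    push_cast at h2
    linarith
  set F : ℕ → ℝ := fun k => f (θ (m k)) with hF
  set C : ℝ := (8 / T + 8 * L) * (K * T ^ (-r)) ^ 2 with hC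
  have hC0 : 0 ≤ C := by positivity
  have hεsq : ∀ k, ε k ^ 2 = (K * T ^ (-r)) ^ 2 * (k : ℝ) ^ (-(2 * r)) := fun k => by
    simp only [hε]
    rw [mul_pow, ← Real.rpow_mul_natCast (by positivity) (-r) 2]
    congr 2; push_cast; ring
  have hdec : ∀ᶠ k : ℕ in atTop,
      F (k + 1) ≤ F k - T / 8 * g k ^ 2 + C * (k : ℝ) ^ (-(2 * r)) := by
    filter_upwards [hblk, hmup] with k h1 h2
    obtain ⟨h3, h4⟩ := h1 (m (k + 1)) (hmm k) le_rfl
    set τ := γ (m (k + 1)) - γ (m k) with hτ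
    have hτ' : T / 2 ≤ τ := by
      have := hm1 (k + 1); push_cast at this; linarith
    have h5 := aux_descent hfd hQconv hL0.le hLip (hθQ (m k)) (hθQ (m (k + 1)))
    have h6 : inner ℝ (G (m k)) (θ (m (k + 1)) - θ (m k)) ≤
        - τ * g k ^ 2 + g k * (ε k + 4 * L * T * (2 * T * g k + ε k)) := by
      have e : θ (m (k + 1)) - θ (m k) =
        (θ (m (k + 1)) - θ (m k) + τ • G (m k)) - τ • G (m k) := by abel
      rw [e, inner_sub_right, inner_smul_right, real_inner_self_eq_norm_sq]
      have h7 := real_inner_le_norm (G (m k)) (θ (m (k + 1)) - θ (m k) + τ • G (m k))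
      have h8 := mul_le_mul_of_nonneg_left h4 (hg0 k)
      simp only [hg] at h8 ⊢
      linarith
    have h9 := aux_scalar (Δ := F (k + 1) - F k) hL1 hT (hg0 k) (hε0 k) hτ' (norm_nonneg _) h3 h6
      (by have := (abs_le.1 h5).2; simp only [hF, hG]; linarith)
    rw [hεsq] at h9
    simp only [hC]
    linarith
  have hfc : Continuous f := hfd.continuous
  obtain ⟨B', hB'⟩ := (hQc.image hfc).bddBelow
  obtain ⟨b, hFb, hFlow⟩ := aux_A (by positivity : 0 < T / 8) hC0 hr
    (fun k => hB' (Set.mem_image_of_mem f (hθQ (m k)))) hdec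
  have hbQ : b ∈ f '' Q := (hQc.image hfc).isClosed.mem_of_tendsto hFb
    (Eventually.of_forall fun k => Set.mem_image_of_mem f (hθQ (m k)))
  obtain ⟨δ, μ, M, hδ, hμ, hM, hloj⟩ := hLoj Q hQc b hbQ
  have hlojF : ∀ᶠ k in atTop, |F k - b| ≤ M * g k ^ μ := by
    have h1 : Tendsto (fun k => |F k - b|) atTop (nhds 0) := by
      simpa using (hFb.sub_const b).abs
    filter_upwards [h1.eventually (gt_mem_nhds hδ.1)] with k hk
    exact hloj _ (hθQ _) hk.le
  obtain ⟨hgs, hkF, hkg⟩ := aux_B (by positivity : 0 < T / 8) hC0 hr (by linarith : 0 ≤ M) hμ.1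
    hg0 hFb hFlow hdec hlojF
  have hεs : Summable ε := (Real.summable_nat_rpow.2 (by linarith)).mul_left _
  -- convergence
  have hR : Summable fun k => 2 * (2 * T * g k + ε k) := ((hgs.mul_left _).add hεs).mul_left _
  have hcau : CauchySeq fun k => θ (m k) := by
    refine cauchySeq_of_summable_dist (Summable.of_norm_bounded_eventually_nat hR ?_)
    filter_upwards [hblk] with k hk
    rw [Real.norm_of_nonneg dist_nonneg, dist_comm, dist_eq_norm]
    exact (hk _ (hmm k) le_rfl).1
  obtain ⟨θhat, hθhat⟩ := cauchySeq_tendsto_of_complete hcau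
  have hfb : f θhat = b := tendsto_nhds_unique ((hfc.tendsto θhat).comp hθhat) hFb
  set κ : ℕ → ℕ := fun n => ⌊γ n / T⌋₊ with hκ
  have hκt : Tendsto κ atTop atTop :=
    tendsto_nat_floor_atTop.comp (hαdiv.atTop_div_const hT0)
  have hγ0 : ∀ n, 0 ≤ γ n := fun n => by
    rw [hγ]; exact Finset.sum_nonneg fun i _ => (hαpos i).le
  have hκ1 : ∀ n, m (κ n) ≤ n := fun n => hm2 _ _ (by
    have := Nat.floor_le (div_nonneg (hγ0 n) hT0.le)
    rwa [le_div_iff₀ hT0] at this)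
  have hκ2 : ∀ n, γ n < (κ n + 1) * T := fun n => by
    have := Nat.lt_floor_add_one (γ n / T)
    rwa [div_lt_iff₀ hT0] at this
  have hκ3 : ∀ n, n ≤ m (κ n + 1) := fun n => by
    by_contra! h
    have h1 := hm1 (κ n + 1)
    push_cast at h1
    linarith [hκ2 n, hmono h.le]
  have hnb : ∀ᶠ n in atTop, ‖θ n - θ (m (κ n))‖ ≤ 2 * (2 * T * g (κ n) + ε (κ n)) := by
    filter_upwards [hκt.eventually hblk] with n hn
    exact (hn n (hκ1 n) (hκ3 n)).1
  have hlim : Tendsto θ atTop (nhds θhat) := by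
    have h1 : Tendsto (fun n => θ n - θ (m (κ n))) atTop (nhds 0) :=
      squeeze_zero_norm' hnb (hR.tendsto_atTop_zero.comp hκt)
    have h2 := h1.add (hθhat.comp hκt)
    simpa using h2
  have hkε : Tendsto (fun k : ℕ => (k : ℝ) * ε k ^ 2) atTop (nhds 0) := by
    have h1 := (aux_rpow0 (by linarith : 0 < 2 * r - 1)).const_mul ((K * T ^ (-r)) ^ 2)
    rw [mul_zero] at h1
    refine h1.congr' ?_
    filter_upwards [eventually_gt_atTop 0] with k hk
    have hk' : (0 : ℝ) < k := by exact_mod_cast hk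
    rw [hεsq, show -(2 * r - 1) = -(2 * r) + 1 by ring, Real.rpow_add hk', Real.rpow_one]; ring
  have hγκ : ∀ᶠ n in atTop, γ n ≤ 2 * T * κ n := by
    filter_upwards [hκt.eventually (eventually_ge_atTop 1)] with n hn
    have h1 : (1 : ℝ) ≤ κ n := by exact_mod_cast hn
    nlinarith [hκ2 n]
  have hW : Tendsto (fun k : ℕ => (k : ℝ) * (g k ^ 2 + ε k ^ 2)) atTop (nhds 0) := by
    have := hkg.add hkε
    rw [add_zero] at this
    exact this.congr fun k => by ring
  refine ⟨θhat, hlim, ?_, ?_⟩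
  · have h1 := (hW.comp hκt).const_mul (2 * T * (8 * L ^ 2))
    rw [mul_zero] at h1
    refine squeeze_zero' (Eventually.of_forall fun n => mul_nonneg (hγ0 n) (by positivity)) ?_ h1
    filter_upwards [hnb, hγκ] with n h2 h3
    have h4 : ‖G n‖ ≤ g (κ n) + L * (2 * (2 * T * g (κ n) + ε (κ n))) := by
      have h5 := hGL n (m (κ n))
      have h6 : ‖G n‖ ≤ ‖G (m (κ n))‖ + ‖G n - G (m (κ n))‖ := by
        have := norm_add_le (G (m (κ n))) (G n - G (m (κ n)))
        rwa [add_sub_cancel] at this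
      have h7 := mul_le_mul_of_nonneg_left h2 hL0.le
      simp only [hg] at h7 ⊢
      linarith
    have hgn := hg0 (κ n)
    have hen := hε0 (κ n)
    have h8 : ‖G n‖ ≤ 2 * L * (g (κ n) + ε (κ n)) := by
      have e : L * (2 * (2 * T * g (κ n) + ε (κ n))) =
        4 * (L * T) * g (κ n) + 2 * L * ε (κ n) := by ring
      rw [e, hLT] at h4
      nlinarith
    have h9 : ‖G n‖ ^ 2 ≤ 8 * L ^ 2 * (g (κ n) ^ 2 + ε (κ n) ^ 2) := by
      calc ‖G n‖ ^ 2 ≤ (2 * L * (g (κ n) + ε (κ n))) ^ 2 := by gcongr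
        _ ≤ _ := by nlinarith [mul_nonneg (sq_nonneg L) (sq_nonneg (g (κ n) - ε (κ n)))]
    calc γ n * ‖G n‖ ^ 2 ≤ (2 * T * κ n) * (8 * L ^ 2 * (g (κ n) ^ 2 + ε (κ n) ^ 2)) := by gcongr
      _ = _ := by simp only [Function.comp]; ring
  · have h1 := ((hkF.comp hκt).add ((hW.comp hκt).const_mul (8 * L + 3))).const_mul (2 * T)
    rw [mul_zero, add_zero, mul_zero] at h1
    refine squeeze_zero' (Eventually.of_forall fun n => mul_nonneg (hγ0 n) (by positivity)) ?_ h1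
    filter_upwards [hnb, hγκ] with n h2 h3
    have hgn := hg0 (κ n)
    have hen := hε0 (κ n)
    have h4 := aux_descent hfd hQconv hL0.le hLip (hθQ (m (κ n))) (hθQ n)
    have h5 := abs_real_inner_le_norm (G (m (κ n))) (θ n - θ (m (κ n)))
    set D := ‖θ n - θ (m (κ n))‖ with hD
    have hD0 : 0 ≤ D := norm_nonneg _
    have hD2 : D ≤ 2 * (g (κ n) + ε (κ n)) := by nlinarith
    have h6 : |f (θ n) - F (κ n)| ≤ g (κ n) * D + L * D ^ 2 := by
      have h7 := abs_add_le (f (θ n) - F (κ n) - inner ℝ (G (m (κ n))) (θ n - θ (m (κ n))))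
        (inner ℝ (G (m (κ n))) (θ n - θ (m (κ n))))
      rw [sub_add_cancel] at h7
      simp only [hg, hF, hG] at h4 h5 h7 ⊢
      linarith
    have h7 : g (κ n) * D ≤ 3 * (g (κ n) ^ 2 + ε (κ n) ^ 2) := by
      nlinarith [mul_le_mul_of_nonneg_left hD2 hgn, sq_nonneg (g (κ n) - ε (κ n))]
    have h8 : L * D ^ 2 ≤ 8 * L * (g (κ n) ^ 2 + ε (κ n) ^ 2) := by
      calc L * D ^ 2 ≤ L * (2 * (g (κ n) + ε (κ n))) ^ 2 := by gcongr
        _ ≤ _ := by nlinarith [mul_nonneg hL0.le (sq_nonneg (g (κ n) - ε (κ n)))]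
    have h9 : |f (θ n) - b| ≤ |F (κ n) - b| + (8 * L + 3) * (g (κ n) ^ 2 + ε (κ n) ^ 2) := by
      have := abs_sub_le (f (θ n)) (F (κ n)) b
      linarith
    rw [hfb]
    calc γ n * |f (θ n) - b| ≤ (2 * T * κ n) *
          (|F (κ n) - b| + (8 * L + 3) * (g (κ n) ^ 2 + ε (κ n) ^ 2)) := by gcongr
      _ = _ := by simp only [Function.comp]; ring

/-- Corollary 1.1 (iii) of the paper: under Assumptions 1.1,
1.2 and 1.3, almost surely on `Λ = {sup_n ‖θ_n‖ < ∞}` (with `θ̂ = lim θ_n`):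
`‖∇f(θ_n)‖² = o(γ_n^{−p})` and `|f(θ_n) − f(θ̂)| = o(γ_n^{−p})`, where
`p = min{1, r}`. -/
theorem stochastic_gradient_rate_min_one_r
    {d : ℕ} (hd : 1 ≤ d)
    {Ω : Type} [MeasurableSpace Ω] (P : Measure Ω) [IsProbabilityMeasure P]
    (f : EuclideanSpace ℝ (Fin d) → ℝ)
    (hfd : Differentiable ℝ f)
    (hlip : LocallyLipschitz (fun x => gradient f x))
    (α : ℕ → ℝ) (hαpos : ∀ n, 0 < α n)
    (θ ξ : ℕ → Ω → EuclideanSpace ℝ (Fin d))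
    (hrec : ∀ n ω, θ (n + 1) ω = θ n ω - α n • (gradient f (θ n ω) + ξ n ω))
    -- Assumption 1.1
    (hα0 : Tendsto α atTop (nhds 0))
    (γ : ℕ → ℝ) (hγ : ∀ n, γ n = ∑ i ∈ Finset.range n, α i)
    (hαdiv : Tendsto γ atTop atTop)
    -- the interpolation index `a(n,t)`
    (a : ℕ → ℝ → ℕ)
    (ha : ∀ n t, 0 < t → a n t = sSup {k | n ≤ k ∧ γ k - γ n ≤ t})
    -- the event Λ
    (Λ : Set Ω) (hΛ : Λ = {ω | ∃ C, ∀ n, ‖θ n ω‖ ≤ C})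
    -- Assumption 1.2
    (r : ℝ) (hr : 1 < r)
    (noise : ℕ → Ω → ℝ)
    (hnoise : ∀ n ω, noise n ω =
      ⨆ k ∈ Set.Ico n (a n 1), ‖∑ i ∈ Finset.Icc n k, (α i * γ i ^ r) • ξ i ω‖)
    (hA12 : ∀ᵐ ω ∂P, ω ∈ Λ → IsBoundedUnder (· ≤ ·) atTop (fun n => noise n ω))
    -- Assumption 1.3 (Łojasiewicz-type gradient inequality)
    (hLoj : ∀ Q : Set (EuclideanSpace ℝ (Fin d)), IsCompact Q → ∀ b ∈ f '' Q,
      ∃ δ μ M : ℝ, δ ∈ Set.Ioc (0 : ℝ) 1 ∧ μ ∈ Set.Ioc (1 : ℝ) 2 ∧ 1 ≤ M ∧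
        ∀ x ∈ Q, |f x - b| ≤ δ → |f x - b| ≤ M * ‖gradient f x‖ ^ μ) :
    ∀ᵐ ω ∂P, ω ∈ Λ →
      ∃ θhat, Tendsto (fun n => θ n ω) atTop (nhds θhat) ∧
        ((fun n => ‖gradient f (θ n ω)‖ ^ 2) =o[atTop] fun n => γ n ^ (-(min 1 r))) ∧
        ((fun n => |f (θ n ω) - f θhat|) =o[atTop] fun n => γ n ^ (-(min 1 r))) := by
  have hp : min 1 r = 1 := min_eq_left hr.le
  rw [hp]
  have hmono : Monotone γ := monotone_nat_of_le_succ fun k => by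
    rw [hγ, hγ, Finset.sum_range_succ]; linarith [hαpos k]
  have hpos : ∀ n, 1 ≤ n → 0 < γ n := fun n hn => by
    rw [hγ]; exact Finset.sum_pos (fun i _ => hαpos i) ⟨0, Finset.mem_range.2 hn⟩
  filter_upwards [hA12] with ω hω hωΛ
  have hbd := hω hωΛ
  rw [hΛ] at hωΛ
  obtain ⟨B, hB⟩ := hωΛ
  obtain ⟨K, hK⟩ := hbd
  rw [eventually_map] at hK
  have hnoise' : ∀ᶠ m in atTop, ∀ n, m ≤ n → γ n - γ m ≤ 1 →
      ‖∑ i ∈ Finset.Ico m n, α i • ξ i ω‖ ≤ max K 0 * γ m ^ (-r) := by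
    filter_upwards [hK, eventually_ge_atTop 1] with m hm hm1 n hmn hn
    rcases hmn.eq_or_lt with rfl | hlt
    · simp only [Finset.Ico_self, Finset.sum_empty, norm_zero]
      exact mul_nonneg (le_max_right _ _) (Real.rpow_nonneg (hpos _ hm1).le _)
    obtain ⟨j, rfl⟩ : ∃ j, n = j + 1 := ⟨n - 1, by omega⟩
    have hbdd : BddAbove {k | m ≤ k ∧ γ k - γ m ≤ 1} := by
      obtain ⟨N, hN⟩ := (hαdiv.eventually (eventually_gt_atTop (γ m + 1))).exists
      refine ⟨N, fun k hk => ?_⟩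
      by_contra! h
      linarith [hk.2, hmono h.le]
    have hna : j + 1 ≤ a m 1 := by
      rw [ha m 1 one_pos]
      exact le_csSup hbdd ⟨hmn, hn⟩
    have hBk : ∀ k, m ≤ k → k ≤ j → ‖∑ i ∈ Finset.Icc m k, (α i * γ i ^ r) • ξ i ω‖ ≤ max K 0 := by
      intro k hk1 hk2
      refine le_trans ?_ (hm.trans (le_max_left _ _))
      rw [hnoise]
      have hmem : k ∈ Set.Ico m (a m 1) := ⟨hk1, by omega⟩
      have hin : ‖∑ i ∈ Finset.Icc m k, (α i * γ i ^ r) • ξ i ω‖ =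
          ⨆ (_ : k ∈ Set.Ico m (a m 1)), ‖∑ i ∈ Finset.Icc m k, (α i * γ i ^ r) • ξ i ω‖ := by
        have : Nonempty (k ∈ Set.Ico m (a m 1)) := ⟨hmem⟩
        rw [ciSup_const]
      rw [hin]
      refine le_ciSup (f := fun k => ⨆ (_ : k ∈ Set.Ico m (a m 1)),
        ‖∑ i ∈ Finset.Icc m k, (α i * γ i ^ r) • ξ i ω‖) ?_ k
      refine ((((Set.finite_Ico m (a m 1)).image fun k =>
        ‖∑ i ∈ Finset.Icc m k, (α i * γ i ^ r) • ξ i ω‖).insert 0).subset ?_).bddAbove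
      rintro _ ⟨k, rfl⟩
      by_cases hk : k ∈ Set.Ico m (a m 1)
      · right
        refine ⟨k, hk, ?_⟩
        have : Nonempty (k ∈ Set.Ico m (a m 1)) := ⟨hk⟩
        simp only [ciSup_const]
      · left
        have : IsEmpty (k ∈ Set.Ico m (a m 1)) := ⟨hk⟩
        exact Real.iSup_of_isEmpty _
    have h1 := aux_abel (c := fun i => γ i ^ (-r)) (b := fun i => (α i * γ i ^ r) • ξ i ω) (m := m)
      (fun i hi => Real.rpow_nonneg (hpos i (by omega)).le _)
      (fun i hi => Real.rpow_le_rpow_of_nonpos (hpos i (by omega)) (hmono (Nat.le_succ i))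
        (by linarith)) (n := j) (by omega) hBk
    have e : ∑ i ∈ Finset.Ico m (j + 1), α i • ξ i ω =
        ∑ i ∈ Finset.Icc m j, γ i ^ (-r) • (α i * γ i ^ r) • ξ i ω := by
      refine Finset.sum_congr (by ext; simp) fun i hi => ?_
      have hi1 := (Finset.mem_Ico.1 hi).1
      have hp := hpos i (by omega)
      rw [smul_smul, Real.rpow_neg hp.le]
      congr 1
      have := (Real.rpow_pos_of_pos hp r).ne'
      field_simp
    rw [e, mul_comm]
    exact h1
  obtain ⟨θhat, h1, h2, h3⟩ := aux_det f hfd hlip α hαpos (fun n => θ n ω) (fun n => ξ n ω)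
    (fun n => hrec n ω) hα0 γ hγ hαdiv r hr hB (le_max_right K 0) hnoise' hLoj
  have hlo : ∀ h : ℕ → ℝ, Tendsto (fun n => γ n * h n) atTop (nhds 0) →
      h =o[atTop] fun n => γ n ^ (-1 : ℝ) := by
    intro h hh
    refine (isLittleO_iff_tendsto' ?_).2 (hh.congr' ?_)
    · filter_upwards [eventually_ge_atTop 1] with n hn h0
      exact absurd h0 (Real.rpow_pos_of_pos (hpos n hn) _).ne'
    · filter_upwards [eventually_ge_atTop 1] with n hn
      rw [Real.rpow_neg_one, div_inv_eq_mul, mul_comm]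
  exact ⟨θhat, h1, hlo _ h2, hlo _ h3⟩
end

section
/- Under Assumptions 1.1, 1.2 and 1.3, there exist random variables Ĉ₂, Ĉ₅ with 1 ≤ Ĉ₂, Ĉ₅ < ∞ everywhere such that, almost surely on Λ, for every real ε > 0 the following hold for all but finitely many n: (1) u(θ_n) ≥ −Ĉ₂ γ_n^{−p̂} (φ_ε(ξ))^{μ̂}; (2) ‖∇f(θ_n)‖² ≤ Ĉ₅ (max{u(θ_n), 0} + γ_n^{−p̂} (φ_ε(ξ))^{μ̂}). -/
open MeasureTheory Filter

lemma sg_abel {E : Type*} [NormedAddCommGroup E] [NormedSpace ℝ E] (b : ℕ → E) (c : ℕ → ℝ)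
    (n k : ℕ) (hnk : n ≤ k) (B : ℝ) (hc0 : ∀ i, n ≤ i → 0 ≤ c i)
    (hc : ∀ i, n ≤ i → c (i + 1) ≤ c i)
    (hB : ∀ j, n ≤ j → j ≤ k → ‖∑ i ∈ Finset.Ico n j, b i‖ ≤ B) :
    ‖∑ i ∈ Finset.Ico n k, c i • b i‖ ≤ c n * B := by
  have key : ∀ j, n ≤ j → j ≤ k →
      ‖∑ i ∈ Finset.Ico n j, c i • b i - c j • ∑ i ∈ Finset.Ico n j, b i‖ ≤ (c n - c j) * B := by
    intro j hj
    induction j, hj using Nat.le_induction with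
    | base => intro _; simp
    | succ j hj ih =>
      intro hjk
      have h1 := ih (by omega)
      have h2 := hB (j + 1) (by omega) hjk
      have e : ∑ i ∈ Finset.Ico n (j+1), c i • b i - c (j+1) • ∑ i ∈ Finset.Ico n (j+1), b i
          = (∑ i ∈ Finset.Ico n j, c i • b i - c j • ∑ i ∈ Finset.Ico n j, b i)
            + (c j - c (j+1)) • ∑ i ∈ Finset.Ico n (j+1), b i := by
        rw [Finset.sum_Ico_succ_top hj, Finset.sum_Ico_succ_top hj]
        module
      rw [e]
      refine (norm_add_le _ _).trans ?_
      rw [norm_smul, Real.norm_of_nonneg (by linarith [hc j hj])]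
      have := mul_le_mul_of_nonneg_left h2 (show 0 ≤ c j - c (j+1) by linarith [hc j hj])
      linarith
  have h1 := key k hnk le_rfl
  have h2 := hB k hnk le_rfl
  have e : ∑ i ∈ Finset.Ico n k, c i • b i
      = (∑ i ∈ Finset.Ico n k, c i • b i - c k • ∑ i ∈ Finset.Ico n k, b i)
        + c k • ∑ i ∈ Finset.Ico n k, b i := by abel
  rw [e]
  refine (norm_add_le _ _).trans ?_
  rw [norm_smul, Real.norm_of_nonneg (hc0 k hnk)]
  have := mul_le_mul_of_nonneg_left h2 (hc0 k hnk)
  linarith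

lemma sg_descent {E : Type*} [NormedAddCommGroup E] [InnerProductSpace ℝ E] [CompleteSpace E]
    (f : E → ℝ) (hf : Differentiable ℝ f) (s : Set E) (hs : Convex ℝ s) (L : ℝ) (hL0 : 0 ≤ L)
    (hL : ∀ x ∈ s, ∀ y ∈ s, ‖gradient f x - gradient f y‖ ≤ L * ‖x - y‖)
    (x y : E) (hx : x ∈ s) (hy : y ∈ s) :
    f y - f x ≤ inner ℝ (gradient f x) (y - x) + L * ‖y - x‖ ^ 2 := by
  have hseg : segment ℝ x y ⊆ s := hs.segment_subset hx hy
  have key := (convex_segment x y).norm_image_sub_le_of_norm_fderiv_le' (𝕜 := ℝ) (f := f)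
    (C := L * ‖y - x‖) (φ := fderiv ℝ f x) (fun z _ => hf z) (by
      intro z hz
      have h1 := hL z (hseg hz) x hx
      have h2 : fderiv ℝ f z - fderiv ℝ f x
          = (InnerProductSpace.toDual ℝ E) (gradient f z - gradient f x) := by
        simp [gradient]
      rw [h2, LinearIsometryEquiv.norm_map]
      refine h1.trans (mul_le_mul_of_nonneg_left ?_ hL0)
      obtain ⟨c, ⟨hc0, hc1⟩, rfl⟩ := (segment_eq_image' ℝ x y ▸ hz)
      simp only [add_sub_cancel_left, norm_smul, Real.norm_of_nonneg hc0]
      nlinarith [norm_nonneg (y - x)])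
    (left_mem_segment ℝ x y) (right_mem_segment ℝ x y)
  have e : fderiv ℝ f x (y - x) = inner ℝ (gradient f x) (y - x) := by
    simp [gradient]
  rw [e, Real.norm_eq_abs] at key
  have := le_abs_self (f y - f x - inner ℝ (gradient f x) (y - x))
  nlinarith

lemma sg_step {E : Type*} [NormedAddCommGroup E] [InnerProductSpace ℝ E] [CompleteSpace E]
    (f : E → ℝ) (hf : Differentiable ℝ f) (s : Set E) (hs : Convex ℝ s) (L : ℝ) (hL0 : 1 ≤ L)
    (hL : ∀ x ∈ s, ∀ y ∈ s, ‖gradient f x - gradient f y‖ ≤ L * ‖x - y‖)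
    (x ξ : ℕ → E) (hx : ∀ n, x n ∈ s) (α γ : ℕ → ℝ) (hα : ∀ n, 0 < α n)
    (hγ : ∀ n, γ (n + 1) = γ n + α n)
    (hrec : ∀ n, x (n + 1) = x n - α n • (gradient f (x n) + ξ n))
    (n k : ℕ) (hnk : n ≤ k) (t : ℝ) (ht : 0 < t) (hLt : 80 * (L * t) ≤ 1)
    (h1 : t / 2 ≤ γ k - γ n) (h2 : γ k - γ n ≤ t) (w : ℝ)
    (hw : ∀ j, n ≤ j → j ≤ k → ‖∑ i ∈ Finset.Ico n j, α i • ξ i‖ ≤ w) :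
    f (x k) - f (x n) ≤ -(t / 4) * ‖gradient f (x n)‖ ^ 2 + 16 / t * w ^ 2 := by
  set g : E → E := fun z => gradient f z with hg
  have hmono : Monotone γ := monotone_nat_of_le_succ (fun i => by rw [hγ]; linarith [hα i])
  have hid : ∀ j, n ≤ j → x j - x n = -((γ j - γ n) • g (x n))
      - ∑ i ∈ Finset.Ico n j, α i • (g (x i) - g (x n)) - ∑ i ∈ Finset.Ico n j, α i • ξ i := by
    intro j hj
    induction j, hj using Nat.le_induction with
    | base => simp
    | succ j hj ih =>
      rw [Finset.sum_Ico_succ_top hj, Finset.sum_Ico_succ_top hj, hrec, hγ]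
      have : x j = x n + (x j - x n) := by abel
      rw [sub_right_comm, ih]
      simp only [hg]
      module
  have hsα : ∀ j, n ≤ j → ∑ i ∈ Finset.Ico n j, α i = γ j - γ n := by
    intro j hj
    induction j, hj using Nat.le_induction with
    | base => simp
    | succ j hj ih => rw [Finset.sum_Ico_succ_top hj, ih, hγ]; ring
  obtain ⟨js, hjs, hmax⟩ := Finset.exists_max_image (Finset.Icc n k) (fun j => ‖x j - x n‖)
    ⟨n, by simp [hnk]⟩
  set m := ‖x js - x n‖ with hm
  set G := ‖g (x n)‖ with hG
  have hm0 : 0 ≤ m := norm_nonneg _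
  have hG0 : 0 ≤ G := norm_nonneg _
  have hw0 : 0 ≤ w := (norm_nonneg _).trans (hw n le_rfl hnk)
  have hD : ∀ j, n ≤ j → j ≤ k →
      ‖∑ i ∈ Finset.Ico n j, α i • (g (x i) - g (x n))‖ ≤ t * (L * m) := by
    intro j hj hjk
    calc _ ≤ ∑ i ∈ Finset.Ico n j, α i * (L * m) := by
          refine norm_sum_le_of_le _ (fun i hi => ?_)
          rw [norm_smul, Real.norm_of_nonneg (hα i).le]
          refine mul_le_mul_of_nonneg_left ?_ (hα i).le
          refine (hL _ (hx _) _ (hx _)).trans (mul_le_mul_of_nonneg_left ?_ (by linarith))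
          rw [Finset.mem_Ico] at hi
          exact hmax i (by rw [Finset.mem_Icc]; omega)
      _ = (γ j - γ n) * (L * m) := by rw [← Finset.sum_mul, hsα j hj]
      _ ≤ _ := by
          refine mul_le_mul_of_nonneg_right ?_ (by positivity)
          linarith [hmono hjk]
  rw [Finset.mem_Icc] at hjs
  have hm1 : m ≤ t * G + t * (L * m) + w := by
    have e := hid js hjs.1
    have a1 := hD js hjs.1 hjs.2
    have a2 := hw js hjs.1 hjs.2
    have a3 : ‖(γ js - γ n) • g (x n)‖ ≤ t * G := by
      rw [norm_smul, Real.norm_of_nonneg (by linarith [hmono hjs.1])]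
      exact mul_le_mul_of_nonneg_right (by linarith [hmono hjs.2]) hG0
    refine (congrArg norm e).le.trans ?_
    refine (norm_sub_le _ _).trans (add_le_add ((norm_sub_le _ _).trans (add_le_add ?_ a1)) a2)
    rwa [norm_neg]
  have hm2 : m ≤ 2 * (t * G + w) := by nlinarith
  have hdes := sg_descent f hf s hs L (by linarith) hL (x n) (x k) (hx n) (hx k)
  have hmk : ‖x k - x n‖ ≤ m := hmax k (by simp [hnk])
  have hin : inner ℝ (gradient f (x n)) (x k - x n) ≤ -(t/2) * G^2 + G * (t * (L * m)) + G * w := by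
    rw [hid k hnk, inner_sub_right, inner_sub_right, inner_neg_right, inner_smul_right]
    have b1 : inner ℝ (gradient f (x n)) (g (x n)) = G ^ 2 := real_inner_self_eq_norm_sq _
    have b2 := neg_le_of_abs_le (abs_real_inner_le_norm (gradient f (x n))
      (∑ i ∈ Finset.Ico n k, α i • (g (x i) - g (x n))))
    have b3 := neg_le_of_abs_le (abs_real_inner_le_norm (gradient f (x n))
      (∑ i ∈ Finset.Ico n k, α i • ξ i))
    have b4 := mul_le_mul_of_nonneg_left (hD k hnk le_rfl) hG0
    have b5 := mul_le_mul_of_nonneg_left (hw k hnk le_rfl) hG0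
    have b6 := mul_le_mul_of_nonneg_right h1 (sq_nonneg G)
    rw [b1]
    change -(G * _) ≤ _ at b2
    change -(G * _) ≤ _ at b3
    linarith
  have c1 : L * ‖x k - x n‖ ^ 2 ≤ L * (8 * (t * G) ^ 2 + 8 * w ^ 2) := by
    refine mul_le_mul_of_nonneg_left ?_ (by linarith)
    have : ‖x k - x n‖ ^ 2 ≤ (2 * (t * G + w)) ^ 2 :=
      pow_le_pow_left₀ (norm_nonneg _) (hmk.trans hm2) 2
    nlinarith [sq_nonneg (t * G - w)]
  have c2 : G * (t * (L * m)) ≤ G * (t * L) * (2 * (t * G + w)) := by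
    have := mul_le_mul_of_nonneg_left hm2 (show 0 ≤ G * (t * L) by positivity)
    linarith
  have c3 : 2 * (G * w) ≤ t / 8 * G ^ 2 + 8 / t * w ^ 2 := by
    have : 0 ≤ t / 8 * (G - 8 / t * w) ^ 2 := by positivity
    have e : t / 8 * (G - 8 / t * w) ^ 2 = t / 8 * G ^ 2 - 2 * (G * w) + 8 / t * w ^ 2 := by
      field_simp; ring
    linarith
  have c4 : L * t * (t * G ^ 2) ≤ 1 / 80 * (t * G ^ 2) :=
    mul_le_mul_of_nonneg_right (by linarith) (by positivity)
  have c5 : L * t * (G * w) ≤ 1 / 80 * (G * w) :=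
    mul_le_mul_of_nonneg_right (by linarith) (by positivity)
  have c6 : L * w ^ 2 ≤ 1 / t * w ^ 2 := by
    refine mul_le_mul_of_nonneg_right ?_ (sq_nonneg w)
    rw [le_div_iff₀ ht]; linarith
  have c7 : 0 ≤ G * w := by positivity
  have c8 : 8 / t * w ^ 2 = 8 * (1 / t * w ^ 2) := by ring
  have c9 : 16 / t * w ^ 2 = 16 * (1 / t * w ^ 2) := by ring
  change f (x k) - f (x n) ≤ -(t / 4) * G ^ 2 + 16 / t * w ^ 2
  rw [c9]
  rw [c8] at c3
  nlinarith

lemma sg_index (α γ : ℕ → ℝ) (hγ : ∀ n, γ (n + 1) = γ n + α n)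
    (hdiv : Tendsto γ atTop atTop) (t : ℝ) (ht : 0 < t) (n : ℕ) (hα : ∀ i, n ≤ i → α i ≤ t / 2) :
    ∃ k, n < k ∧ t / 2 ≤ γ k - γ n ∧ γ k - γ n ≤ t := by
  have hex : ∃ k, n ≤ k ∧ t / 2 ≤ γ k - γ n := by
    obtain ⟨k, hk, hk'⟩ := ((hdiv.eventually_ge_atTop (γ n + t/2)).and (eventually_ge_atTop n)).exists
    exact ⟨k, hk', by linarith⟩
  classical
  obtain ⟨h1, h2⟩ := Nat.find_spec hex
  set k := Nat.find hex with hk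
  have hne : n ≠ k := by
    intro h; rw [← h] at h2; linarith
  have hlt : n < k := lt_of_le_of_ne h1 hne
  obtain ⟨j, hj⟩ : ∃ j, k = j + 1 := ⟨k - 1, by omega⟩
  have hmin := Nat.find_min hex (m := j) (by omega)
  push Not at hmin
  have := hmin (by omega)
  refine ⟨k, hlt, h2, ?_⟩
  rw [hj, hγ]
  linarith [hα j (by omega)]

lemma sg_core (t : ℝ) (ht : 0 < t) (M μ : ℝ) (hM : 1 ≤ M) (hμ : μ ∈ Set.Ioc (1:ℝ) 2)
    (u G v : ℕ → ℝ) (hG : ∀ n, 0 ≤ G n) (hv : ∀ᶠ n in atTop, 0 < v n)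
    (hv0 : Tendsto v atTop (nhds 0))
    (hanti : ∀ᶠ n in atTop, ∀ k, n ≤ k → v k ≤ v n)
    (hstep : ∀ᶠ n in atTop, ∃ k, n < k ∧ u k - u n ≤ -(t / 4) * G n ^ 2 + 16 / t * v n ^ 2)
    (hinf : ∀ c < (0:ℝ), ∀ᶠ n in atTop, c < u n)
    (hLoj : ∀ᶠ n in atTop, u n < 0 → |u n| ≤ M * G n ^ μ) :
    ∀ᶠ n in atTop, (-(M * (8 / t) ^ μ * v n ^ μ) ≤ u n) ∧
      G n ^ 2 ≤ (4 / t * (1 + M * (8 / t) ^ μ + 16 / t)) * (max (u n) 0 + v n ^ μ) := by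
  obtain ⟨N, hN⟩ := eventually_atTop.1 (((hv.and hanti).and (hstep.and hLoj)).and
    (hv0.eventually (eventually_lt_nhds one_pos)))
  have hμ0 : 0 < μ := by linarith [hμ.1]
  have hc0 : 0 < 8 / t := by positivity
  have first : ∀ n, N ≤ n → -(M * (8 / t) ^ μ * v n ^ μ) ≤ u n := by
    intro n hn
    by_contra hcon
    push Not at hcon
    have hvn := (hN n hn).1.1.1
    have hun : u n < 0 := by
      have : 0 ≤ M * (8 / t) ^ μ * v n ^ μ := by positivity
      linarith
    have hchain : ∀ m, n ≤ m → u m ≤ u n → ∃ k, m < k ∧ u k ≤ u n := by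
      intro m hm hum
      obtain ⟨⟨⟨hvm, -⟩, ⟨k, hk, hst⟩, hl⟩, -⟩ := hN m (hn.trans hm)
      have hvmn := (hN n hn).1.1.2 m hm
      refine ⟨k, hk, ?_⟩
      have hl' := hl (by linarith)
      rw [abs_of_neg (by linarith)] at hl'
      have h1 : v m ^ μ ≤ v n ^ μ := Real.rpow_le_rpow hvm.le hvmn hμ0.le
      have h2 : M * (8 / t) ^ μ * v m ^ μ ≤ M * (8 / t) ^ μ * v n ^ μ :=
        mul_le_mul_of_nonneg_left h1 (by positivity)
      have h3 : M * (8 / t * v m) ^ μ < M * G m ^ μ := by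
        rw [Real.mul_rpow hc0.le hvm.le]
        linarith
      have h4 : 8 / t * v m < G m := by
        have := lt_of_mul_lt_mul_left h3 (by linarith)
        exact (Real.rpow_lt_rpow_iff (by positivity) (hG m) hμ0).1 this
      have h5 : (8 / t * v m) ^ 2 ≤ G m ^ 2 := pow_le_pow_left₀ (by positivity) h4.le 2
      have h6 : t / 4 * (8 / t * v m) ^ 2 = 16 / t * v m ^ 2 := by field_simp; norm_num
      have h7 := mul_le_mul_of_nonneg_left h5 (show 0 ≤ t / 4 by positivity)
      linarith
    have hfreq : ∀ K, ∃ k, K ≤ k ∧ n ≤ k ∧ u k ≤ u n := by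
      intro K
      induction K with
      | zero => exact ⟨n, by omega, le_rfl, le_rfl⟩
      | succ K ih =>
        obtain ⟨m, h1, h2, h3⟩ := ih
        obtain ⟨k, h4, h5⟩ := hchain m h2 h3
        exact ⟨k, by omega, by omega, h5⟩
    obtain ⟨K, hK⟩ := eventually_atTop.1 (hinf (u n) hun)
    obtain ⟨k, h1, -, h3⟩ := hfreq K
    linarith [hK k h1]
  filter_upwards [eventually_ge_atTop N] with n hn
  refine ⟨first n hn, ?_⟩
  obtain ⟨⟨⟨hvn, han⟩, ⟨k, hk, hst⟩, -⟩, hv1⟩ := hN n hn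
  have hkN : N ≤ k := hn.trans hk.le
  have hvk := (hN k hkN).1.1.1
  have h1 := first k hkN
  have h2 : v k ^ μ ≤ v n ^ μ := Real.rpow_le_rpow hvk.le (han k hk.le) hμ0.le
  have h3 : M * (8 / t) ^ μ * v k ^ μ ≤ M * (8 / t) ^ μ * v n ^ μ :=
    mul_le_mul_of_nonneg_left h2 (by positivity)
  have h4 : v n ^ 2 ≤ v n ^ μ := by
    rw [← Real.rpow_natCast]
    exact Real.rpow_le_rpow_of_exponent_ge hvn hv1.le (by exact_mod_cast hμ.2)
  have h5 : 16 / t * v n ^ 2 ≤ 16 / t * v n ^ μ := mul_le_mul_of_nonneg_left h4 (by positivity)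
  have h6 : t / 4 * G n ^ 2 ≤ max (u n) 0 + (M * (8 / t) ^ μ + 16 / t) * v n ^ μ := by
    linarith [le_max_left (u n) 0]
  have hA : 0 ≤ M * (8 / t) ^ μ + 16 / t := by positivity
  have hV : 0 ≤ v n ^ μ := by positivity
  have hU : 0 ≤ max (u n) 0 := le_max_right _ _
  have h7 : t / 4 * G n ^ 2 ≤ (1 + M * (8 / t) ^ μ + 16 / t) * (max (u n) 0 + v n ^ μ) := by
    nlinarith [mul_nonneg hA hU]
  have h8 := mul_le_mul_of_nonneg_left h7 (show 0 ≤ 4 / t by positivity)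
  have h9 : 4 / t * (t / 4 * G n ^ 2) = G n ^ 2 := by field_simp
  rw [h9, ← mul_assoc] at h8
  exact h8

lemma sg_liminf_cluster {E : Type*} [TopologicalSpace E] (f : E → ℝ) (hf : Continuous f)
    (s : Set E) (hs : IsCompact s) (x : ℕ → E) (hx : ∀ n, x n ∈ s) :
    (∀ c < liminf (fun n => f (x n)) atTop, ∀ᶠ n in atTop, c < f (x n)) ∧
    ∃ z, MapClusterPt z atTop x ∧ f z = liminf (fun n => f (x n)) atTop := by
  have hb := hs.image hf
  have hbb : IsBoundedUnder (· ≥ ·) atTop (fun n => f (x n)) := by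
    obtain ⟨b, hb'⟩ := hb.bddBelow
    exact ⟨b, by simpa using ⟨0, fun n _ => hb' ⟨x n, hx n, rfl⟩⟩⟩
  have hba : IsBoundedUnder (· ≤ ·) atTop (fun n => f (x n)) := by
    obtain ⟨b, hb'⟩ := hb.bddAbove
    exact ⟨b, by simpa using ⟨0, fun n _ => hb' ⟨x n, hx n, rfl⟩⟩⟩
  have h1 : ∀ c < liminf (fun n => f (x n)) atTop, ∀ᶠ n in atTop, c < f (x n) :=
    fun c hc => eventually_lt_of_lt_liminf hc hbb
  refine ⟨h1, ?_⟩
  set l := liminf (fun n => f (x n)) atTop with hl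
  have hcl : MapClusterPt l atTop (fun n => f (x n)) := by
    rw [mapClusterPt_iff_frequently]
    intro U hU
    obtain ⟨ε, hε, hU'⟩ := Metric.mem_nhds_iff.1 hU
    have h2 : ∃ᶠ n in atTop, f (x n) < l + ε :=
      frequently_lt_of_liminf_lt hba.isCoboundedUnder_ge (by rw [← hl]; linarith)
    refine (h2.and_eventually (h1 (l - ε) (by linarith))).mono (fun n hn => hU' ?_)
    rw [Metric.mem_ball, Real.dist_eq, abs_lt]
    constructor <;> linarith [hn.1, hn.2]
  obtain ⟨U, hU, hUt⟩ := mapClusterPt_iff_ultrafilter.1 hcl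
  obtain ⟨z, -, hz⟩ := hs.ultrafilter_le_nhds (U.map x) (by
    rw [le_principal_iff]
    exact Filter.mem_map.2 (Filter.univ_mem' hx))
  refine ⟨z, mapClusterPt_iff_ultrafilter.2 ⟨U, hU, hz⟩, ?_⟩
  have : Tendsto (fun n => f (x n)) U (nhds (f z)) := (hf.tendsto z).comp hz
  exact tendsto_nhds_unique this hUt

lemma sg_noise_le (F : ℕ → ℝ) (hF : ∀ k, 0 ≤ F k) (n m j : ℕ) (hj : n ≤ j) (hjm : j < m) :
    F j ≤ ⨆ k ∈ Set.Ico n m, F k := by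
  have hb : BddAbove (Set.range (fun k => ⨆ (_ : k ∈ Set.Ico n m), F k)) := by
    refine ⟨∑ k ∈ Finset.range m, F k, ?_⟩
    rintro _ ⟨k, rfl⟩
    refine Real.iSup_le (fun hk => ?_) (Finset.sum_nonneg fun i _ => hF i)
    exact Finset.single_le_sum (f := F) (fun i _ => hF i) (Finset.mem_range.2 hk.2)
  have := le_ciSup hb j
  rwa [ciSup_pos (show j ∈ Set.Ico n m from ⟨hj, hjm⟩)] at this

/-- Lemma 1.5 of the paper: under Assumptions 1.1, 1.2, 1.3
there are random variables `Ĉ₂, Ĉ₅ ∈ [1,∞)` such that, almost surely on `Λ`,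
for every `ε > 0` and all but finitely many `n`:
`u(θ_n) ≥ −Ĉ₂ γ_n^{−p̂} (φ_ε(ξ))^μ̂` and
`‖∇f(θ_n)‖² ≤ Ĉ₅ (max{u(θ_n),0} + γ_n^{−p̂} (φ_ε(ξ))^μ̂)`. -/
theorem stochastic_gradient_lower_and_gradient_bounds
    {d : ℕ} (hd : 1 ≤ d)
    {Ω : Type} [MeasurableSpace Ω] (P : Measure Ω) [IsProbabilityMeasure P]
    (f : EuclideanSpace ℝ (Fin d) → ℝ)
    (hfd : Differentiable ℝ f)
    (hlip : LocallyLipschitz (fun x => gradient f x))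
    (α : ℕ → ℝ) (hαpos : ∀ n, 0 < α n)
    (θ ξ : ℕ → Ω → EuclideanSpace ℝ (Fin d))
    (hrec : ∀ n ω, θ (n + 1) ω = θ n ω - α n • (gradient f (θ n ω) + ξ n ω))
    -- Assumption 1.1
    (hα0 : Tendsto α atTop (nhds 0))
    (γ : ℕ → ℝ) (hγ : ∀ n, γ n = ∑ i ∈ Finset.range n, α i)
    (hαdiv : Tendsto γ atTop atTop)
    -- the interpolation index `a(n,t)`
    (a : ℕ → ℝ → ℕ)
    (ha : ∀ n t, 0 < t → a n t = sSup {k | n ≤ k ∧ γ k - γ n ≤ t})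
    -- the event Λ
    (Λ : Set Ω) (hΛ : Λ = {ω | ∃ C, ∀ n, ‖θ n ω‖ ≤ C})
    -- Assumption 1.2
    (r : ℝ) (hr : 1 < r)
    (noise : ℕ → Ω → ℝ)
    (hnoise : ∀ n ω, noise n ω =
      ⨆ k ∈ Set.Ico n (a n 1), ‖∑ i ∈ Finset.Icc n k, (α i * γ i ^ r) • ξ i ω‖)
    (hA12 : ∀ᵐ ω ∂P, ω ∈ Λ → IsBoundedUnder (· ≤ ·) atTop (fun n => noise n ω))
    (Xi : Ω → ℝ) (hXi : ∀ ω, Xi ω = Filter.limsup (fun n => noise n ω) atTop)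
    -- Assumption 1.3 (Łojasiewicz-type gradient inequality, with a choice
    -- `δ_{Q,a}, μ_{Q,a}, M_{Q,a}` of the Łojasiewicz data for each compact `Q`
    -- and each value `a ∈ f(Q)`)
    (δQ μQ MQ : Set (EuclideanSpace ℝ (Fin d)) → ℝ → ℝ)
    (hLoj : ∀ Q : Set (EuclideanSpace ℝ (Fin d)), IsCompact Q → ∀ b ∈ f '' Q,
      δQ Q b ∈ Set.Ioc (0 : ℝ) 1 ∧ μQ Q b ∈ Set.Ioc (1 : ℝ) 2 ∧ 1 ≤ MQ Q b ∧
      ∀ x ∈ Q, |f x - b| ≤ δQ Q b → |f x - b| ≤ MQ Q b * ‖gradient f x‖ ^ μQ Q b)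
    -- the local Łojasiewicz data `δ_θ, μ_θ, M_θ` provided by Assumption 1.3
    (δl μl Ml : EuclideanSpace ℝ (Fin d) → ℝ)
    (hδl : ∀ x, δl x ∈ Set.Ioc (0 : ℝ) 1)
    (hμl : ∀ x, μl x ∈ Set.Ioc (1 : ℝ) 2)
    (hMl : ∀ x, 1 ≤ Ml x)
    (hLocal : ∀ x y, ‖y - x‖ ≤ δl x → |f y - f x| ≤ Ml x * ‖gradient f y‖ ^ μl x)
    -- `f̂ = liminf_n f(θ_n)`
    (fhat : Ω → ℝ)
    (hfhat : ∀ ω, fhat ω = Filter.liminf (fun n => f (θ n ω)) atTop)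
    -- `Â` = set of accumulation points of `{θ_n}`, and
    -- `Q̂ = cl(⋃_{θ ∈ Â} {θ' : ‖θ' − θ‖ ≤ δ_θ/2})`
    (Ahat : Ω → Set (EuclideanSpace ℝ (Fin d)))
    (hAhat : ∀ ω, Ahat ω = {x | MapClusterPt x atTop (fun n => θ n ω)})
    (Qhat : Ω → Set (EuclideanSpace ℝ (Fin d)))
    (hQhat : ∀ ω, Qhat ω = closure (⋃ x ∈ Ahat ω, Metric.closedBall x (δl x / 2)))
    -- `μ̂ = μ_{Q̂,f̂}`, `r̂ = 1/(2−μ̂)` (`= ∞` if `μ̂ = 2`), `p̂ = μ̂ min{r,r̂}`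
    (μhat : Ω → ℝ) (hμhat : ∀ ω, μhat ω = μQ (Qhat ω) (fhat ω))
    (phat : Ω → ℝ)
    (hphat : ∀ ω, phat ω =
      μhat ω * (if μhat ω < 2 then min r (1 / (2 - μhat ω)) else r))
    -- `φ_ε(ξ) = φ(ξ) + ε` where `φ(ξ) = ξ` if `r < r̂`, `1 + ξ` if `r = r̂`,
    -- and `1` if `r > r̂`
    (φe : Ω → ℝ → ℝ)
    (hφe : ∀ ω ε, φe ω ε =
      (if μhat ω = 2 ∨ r < 1 / (2 - μhat ω) then Xi ω
        else if r = 1 / (2 - μhat ω) then 1 + Xi ω else 1) + ε) :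
    ∃ C₂ C₅ : Ω → ℝ, (∀ ω, 1 ≤ C₂ ω) ∧ (∀ ω, 1 ≤ C₅ ω) ∧
      ∀ᵐ ω ∂P, ω ∈ Λ → ∀ ε : ℝ, 0 < ε →
        ∀ᶠ n in atTop,
          (f (θ n ω) - fhat ω ≥ -(C₂ ω * γ n ^ (-(phat ω)) * φe ω ε ^ μhat ω)) ∧
          (‖gradient f (θ n ω)‖ ^ 2 ≤
            C₅ ω * (max (f (θ n ω) - fhat ω) 0 +
              γ n ^ (-(phat ω)) * φe ω ε ^ μhat ω)) := by
  have hγs : ∀ n, γ (n + 1) = γ n + α n := fun n => by rw [hγ, hγ, Finset.sum_range_succ]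
  have hmono : Monotone γ := monotone_nat_of_le_succ (fun i => by rw [hγs]; linarith [hαpos i])
  have hγpos : ∀ n, 1 ≤ n → 0 < γ n := by
    intro n hn
    have h0 : γ 1 = α 0 := by rw [hγ]; simp
    linarith [hmono hn, hαpos 0]
  -- indices reached within one unit of time lie below `a n 1`
  have hale : ∀ n k, n ≤ k → γ k - γ n ≤ 1 → k ≤ a n 1 := by
    intro n k hnk hk
    rw [ha n 1 one_pos]
    refine le_csSup ?_ ⟨hnk, hk⟩
    obtain ⟨N, hN⟩ := eventually_atTop.1 (hαdiv.eventually_gt_atTop (γ n + 1))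
    refine ⟨N, fun j hj => ?_⟩
    by_contra hcon
    have h1 := hN j (by omega)
    have h2 := hj.2
    linarith
  have key : ∀ ω, ∃ C₂ C₅ : ℝ, 1 ≤ C₂ ∧ 1 ≤ C₅ ∧
      (ω ∈ Λ → IsBoundedUnder (· ≤ ·) atTop (fun n => noise n ω) → ∀ ε : ℝ, 0 < ε →
        ∀ᶠ n in atTop,
          (f (θ n ω) - fhat ω ≥ -(C₂ * γ n ^ (-(phat ω)) * φe ω ε ^ μhat ω)) ∧
          (‖gradient f (θ n ω)‖ ^ 2 ≤
            C₅ * (max (f (θ n ω) - fhat ω) 0 +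
              γ n ^ (-(phat ω)) * φe ω ε ^ μhat ω))) := by
    intro ω
    by_cases hω : ω ∈ Λ
    swap
    · exact ⟨1, 1, le_rfl, le_rfl, fun h => absurd h hω⟩
    rw [hΛ] at hω
    obtain ⟨R, hR⟩ := hω
    set s := Metric.closedBall (0 : EuclideanSpace ℝ (Fin d)) R with hs
    have hscpt : IsCompact s := isCompact_closedBall _ _
    have hsconv : Convex ℝ s := convex_closedBall _ _
    have hxs : ∀ n, θ n ω ∈ s := fun n => by rw [hs, mem_closedBall_zero_iff]; exact hR n
    -- Lipschitz constant
    obtain ⟨K, hK⟩ := (hlip.locallyLipschitzOn (s := s)).exists_lipschitzOnWith_of_compact hscpt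
    set L : ℝ := max K 1 with hLdef
    have hL1 : 1 ≤ L := le_max_right _ _
    have hL : ∀ x ∈ s, ∀ y ∈ s, ‖gradient f x - gradient f y‖ ≤ L * ‖x - y‖ := by
      intro x hx y hy
      have := hK.dist_le_mul x hx y hy
      rw [dist_eq_norm, dist_eq_norm] at this
      exact this.trans (mul_le_mul_of_nonneg_right (le_max_left _ _) (norm_nonneg _))
    set t : ℝ := 1 / (80 * L) with htdef
    have ht : 0 < t := by positivity
    have hLt : 80 * (L * t) ≤ 1 := by
      rw [htdef]; apply le_of_eq; field_simp
    have ht1 : t ≤ 1 := by nlinarith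
    -- cluster points
    obtain ⟨hinf, z, hz, hfz⟩ := sg_liminf_cluster f hfd.continuous s hscpt (fun n => θ n ω) hxs
    rw [← hfhat ω] at hinf hfz
    have hAs : ∀ x ∈ Ahat ω, x ∈ s := by
      intro x hx
      rw [hAhat] at hx
      by_contra hxn
      obtain ⟨n, hn⟩ := (mapClusterPt_iff_frequently.1 hx sᶜ
        (hscpt.isClosed.isOpen_compl.mem_nhds hxn)).exists
      exact hn (hxs n)
    have hQc : IsCompact (Qhat ω) := by
      rw [hQhat]
      refine Metric.isCompact_of_isClosed_isBounded isClosed_closure (Bornology.IsBounded.closure ?_)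
      refine (Metric.isBounded_closedBall (x := (0 : EuclideanSpace ℝ (Fin d))) (r := R + 1)).subset ?_
      intro y hy
      simp only [Set.mem_iUnion] at hy
      obtain ⟨x, hx, hy⟩ := hy
      have h1 := hAs x hx
      rw [hs, mem_closedBall_zero_iff] at h1
      rw [Metric.mem_closedBall, dist_eq_norm] at hy
      rw [mem_closedBall_zero_iff]
      have h2 : ‖y‖ ≤ ‖y - x‖ + ‖x‖ := by simpa using norm_add_le (y - x) x
      linarith [(hδl x).2, (hδl x).1]
    have hzQ : z ∈ Qhat ω := by
      rw [hQhat]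
      refine subset_closure (Set.mem_iUnion₂.2 ⟨z, ?_, ?_⟩)
      · rw [hAhat]; exact hz
      · exact Metric.mem_closedBall_self (by linarith [(hδl z).1])
    have hevQ : ∀ᶠ n in atTop, θ n ω ∈ Qhat ω := by
      set U : Set (EuclideanSpace ℝ (Fin d)) := ⋃ x ∈ Ahat ω, Metric.ball x (δl x / 2) with hU
      have hUo : IsOpen U := isOpen_biUnion fun x _ => Metric.isOpen_ball
      have hUQ : U ⊆ Qhat ω := by
        rw [hQhat]
        exact (Set.iUnion₂_mono fun x _ => Metric.ball_subset_closedBall).trans subset_closure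
      by_contra hcon
      have hfr : ∃ᶠ n in atTop, θ n ω ∈ s \ U := by
        rw [not_eventually] at hcon
        exact hcon.mono fun n hn => ⟨hxs n, fun h => hn (hUQ h)⟩
      obtain ⟨x, hx, hxc⟩ := (hscpt.diff hUo).exists_mapClusterPt_of_frequently hfr
      refine hx.2 (Set.mem_iUnion₂.2 ⟨x, ?_, ?_⟩)
      · rw [hAhat]; exact hxc
      · exact Metric.mem_ball_self (by linarith [(hδl x).1])
    obtain ⟨hδ, hμ, hM, hl⟩ := hLoj (Qhat ω) hQc (fhat ω) ⟨z, hzQ, hfz⟩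
    rw [← hμhat] at hμ hl
    set μ := μhat ω with hμdef
    set M := MQ (Qhat ω) (fhat ω) with hMdef
    have hμ0 : 0 < μ := by linarith [hμ.1]
    set ρ : ℝ := if μ < 2 then min r (1 / (2 - μ)) else r with hρ
    have hp : phat ω = μ * ρ := hphat ω
    have hρ0 : 0 < ρ := by
      rw [hρ]
      split_ifs with h
      · exact lt_min (by linarith) (by apply div_pos one_pos; linarith)
      · linarith
    have h8 : 1 ≤ 8 / t := by rw [le_div_iff₀ ht]; linarith
    have h8μ : 1 ≤ (8 / t) ^ μ := Real.one_le_rpow h8 hμ0.le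
    refine ⟨M * (8 / t) ^ μ, 4 / t * (1 + M * (8 / t) ^ μ + 16 / t), by nlinarith, ?_, ?_⟩
    · have h1 : 1 ≤ 4 / t := by rw [le_div_iff₀ ht]; linarith
      have h2 : 0 ≤ M * (8 / t) ^ μ + 16 / t := by positivity
      nlinarith
    intro _ hbdd ε hε
    have hnoise_nonneg : ∀ n, 0 ≤ noise n ω := by
      intro n
      rw [hnoise]
      exact Real.iSup_nonneg fun k => Real.iSup_nonneg fun _ => norm_nonneg _
    have hevn : ∀ᶠ n in atTop, noise n ω < Xi ω + ε := by
      refine eventually_lt_of_limsup_lt ?_ hbdd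
      rw [← hXi]; linarith
    have hXε : 0 < Xi ω + ε := by
      obtain ⟨n, hn⟩ := hevn.exists
      linarith [hnoise_nonneg n]
    have hcases : (ρ = r ∧ Xi ω + ε ≤ φe ω ε) ∨ (ρ < r ∧ φe ω ε = 1 + ε) := by
      have hφ := hφe ω ε
      rw [← hμdef] at hφ
      by_cases h2 : μ < 2
      · rw [if_pos h2] at hρ
        rcases lt_trichotomy r (1 / (2 - μ)) with h | h | h
        · left
          rw [if_pos (Or.inr h)] at hφ
          exact ⟨hρ.trans (min_eq_left h.le), hφ.ge⟩
        · left
          rw [if_neg (by rintro (h' | h') <;> linarith), if_pos h] at hφ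
          exact ⟨hρ.trans (min_eq_left h.le), by rw [hφ]; linarith⟩
        · right
          rw [if_neg (by rintro (h' | h') <;> linarith), if_neg h.ne'] at hφ
          exact ⟨by rw [hρ, min_eq_right h.le]; exact h, hφ⟩
      · left
        rw [if_neg h2] at hρ
        rw [if_pos (Or.inl (by linarith [hμ.2]))] at hφ
        exact ⟨hρ, hφ.ge⟩
    have hφ0 : 0 < φe ω ε := by
      rcases hcases with h | h
      · linarith [h.2]
      · linarith [h.2]
    set v : ℕ → ℝ := fun n => γ n ^ (-ρ) * φe ω ε with hvdef
    have hvμ : ∀ n, 1 ≤ n → v n ^ μ = γ n ^ (-(phat ω)) * φe ω ε ^ μ := by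
      intro n hn
      have h := hγpos n hn
      rw [hvdef]
      simp only
      rw [Real.mul_rpow (by positivity) hφ0.le, ← Real.rpow_mul h.le, hp]
      congr 2
      ring
    have hwv : ∀ᶠ n in atTop, γ n ^ (-r) * noise n ω ≤ v n := by
      rcases hcases with ⟨h1, h2⟩ | ⟨h1, h2⟩
      · filter_upwards [hevn, eventually_ge_atTop 1] with n hn hn1
        have h := hγpos n hn1
        rw [hvdef]
        simp only
        rw [h1]
        exact mul_le_mul_of_nonneg_left (by linarith) (by positivity)
      · have hlim : Tendsto (fun n => γ n ^ (-(r - ρ)) * (Xi ω + ε)) atTop (nhds 0) := by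
          have := ((tendsto_rpow_neg_atTop (show 0 < r - ρ by linarith)).comp hαdiv).mul_const
            (Xi ω + ε)
          simpa using this
        filter_upwards [hevn, eventually_ge_atTop 1, hlim.eventually (eventually_lt_nhds one_pos)]
          with n hn hn1 hn2
        have h := hγpos n hn1
        rw [hvdef]
        simp only
        rw [h2]
        have e : γ n ^ (-r) = γ n ^ (-ρ) * γ n ^ (-(r - ρ)) := by
          rw [← Real.rpow_add h]; congr 1; ring
        rw [e, mul_assoc]
        refine mul_le_mul_of_nonneg_left ?_ (by positivity)
        have h3 : γ n ^ (-(r - ρ)) * noise n ω ≤ γ n ^ (-(r - ρ)) * (Xi ω + ε) :=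
          mul_le_mul_of_nonneg_left hn.le (by positivity)
        linarith
    have hstep : ∀ᶠ n in atTop, ∃ k, n < k ∧
        (f (θ k ω) - fhat ω) - (f (θ n ω) - fhat ω) ≤
          -(t / 4) * ‖gradient f (θ n ω)‖ ^ 2 + 16 / t * v n ^ 2 := by
      obtain ⟨N, hN⟩ := eventually_atTop.1
        (hα0.eventually (eventually_le_nhds (show (0:ℝ) < t / 2 by positivity)))
      filter_upwards [hwv, eventually_ge_atTop 1, eventually_ge_atTop N] with n hn hn1 hnN
      obtain ⟨k, hk, hk1, hk2⟩ := sg_index α γ hγs hαdiv t ht n (fun i hi => hN i (hnN.trans hi))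
      refine ⟨k, hk, ?_⟩
      have hka : k ≤ a n 1 := hale n k hk.le (hk2.trans ht1)
      have := sg_step f hfd s hsconv L hL1 hL (fun n => θ n ω) (fun n => ξ n ω) hxs α γ hαpos hγs
        (fun n => hrec n ω) n k hk.le t ht hLt hk1 hk2 (v n) (by
          intro j hj hjk
          refine le_trans ?_ hn
          have e : ∑ i ∈ Finset.Ico n j, α i • ξ i ω
              = ∑ i ∈ Finset.Ico n j, γ i ^ (-r) • ((α i * γ i ^ r) • ξ i ω) := by
            refine Finset.sum_congr rfl fun i hi => ?_
            have hi' := hγpos i (by rw [Finset.mem_Ico] at hi; omega)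
            rw [smul_smul]
            congr 1
            rw [mul_left_comm, ← Real.rpow_add hi']
            simp
          rw [e]
          refine sg_abel (fun i => (α i * γ i ^ r) • ξ i ω) (fun i => γ i ^ (-r)) n j hj _ ?_ ?_ ?_
          · intro i hi
            have := hγpos i (by omega)
            positivity
          · intro i hi
            exact Real.rpow_le_rpow_of_nonpos (hγpos i (by omega)) (hmono (Nat.le_succ i))
              (by linarith)
          · intro j' hj' hjj'
            rcases eq_or_lt_of_le hj' with h | h
            · rw [← h]; simpa using hnoise_nonneg n
            · rw [hnoise]
              have h3 := sg_noise_le (fun k => ‖∑ i ∈ Finset.Icc n k, (α i * γ i ^ r) • ξ i ω‖)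
                (fun k => norm_nonneg _) n (a n 1) (j' - 1) (by omega) (by omega)
              have h4 : Finset.Ico n j' = Finset.Icc n (j' - 1) := by
                ext i; simp only [Finset.mem_Ico, Finset.mem_Icc]; omega
              rw [h4]
              exact h3)
      simpa using this
    have hv0 : Tendsto v atTop (nhds 0) := by
      have := ((tendsto_rpow_neg_atTop hρ0).comp hαdiv).mul_const (φe ω ε)
      simpa [hvdef] using this
    have hfin := sg_core t ht M μ hM hμ (fun n => f (θ n ω) - fhat ω)
      (fun n => ‖gradient f (θ n ω)‖) v (fun n => norm_nonneg _)
      (by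
        filter_upwards [eventually_ge_atTop 1] with n hn
        have := hγpos n hn
        simp only [hvdef]; positivity) hv0
      (by
        filter_upwards [eventually_ge_atTop 1] with n hn k hk
        simp only [hvdef]
        exact mul_le_mul_of_nonneg_right
          (Real.rpow_le_rpow_of_nonpos (hγpos n hn) (hmono hk) (by linarith)) hφ0.le)
      hstep
      (by
        intro c hc
        filter_upwards [hinf (fhat ω + c) (by linarith)] with n hn
        linarith)
      (by
        filter_upwards [hevQ, hinf (fhat ω - δQ (Qhat ω) (fhat ω)) (by linarith [hδ.1])]
          with n hn hn2 hneg
        refine hl _ hn ?_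
        rw [abs_of_neg hneg]; linarith)
    filter_upwards [hfin, eventually_ge_atTop 1] with n hn hn1
    rw [hvμ n hn1] at hn
    refine ⟨?_, hn.2⟩
    rw [mul_assoc]
    exact hn.1
  choose C₂ C₅ h₂ h₅ h using key
  refine ⟨C₂, C₅, h₂, h₅, ?_⟩
  filter_upwards [hA12] with ω hω hωΛ ε hε
  exact h ω hωΛ (hω hωΛ) ε hε
end

section
/- Under Assumptions 1.1, 1.2 and 1.3, there exists a random variable Ĉ₆ with 1 ≤ Ĉ₆ < ∞ everywhere such that, almost surely on Λ, for every real ε > 0: liminf_{n→∞} γ_n^{p̂} u(θ_n) ≤ Ĉ₆ (φ_ε(ξ))^{μ̂}. -/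
open MeasureTheory Filter

theorem sgl_descent {E : Type*} [NormedAddCommGroup E] [InnerProductSpace ℝ E] [CompleteSpace E]
    {f : E → ℝ} (hf : Differentiable ℝ f) {S : Set E} (hS : Convex ℝ S) {L : ℝ} (hL0 : 0 ≤ L)
    (hL : ∀ x ∈ S, ∀ y ∈ S, ‖gradient f x - gradient f y‖ ≤ L * ‖x - y‖)
    {x y : E} (hx : x ∈ S) (hy : y ∈ S) :
    f y ≤ f x + inner ℝ (gradient f x) (y - x) + L * ‖y - x‖ ^ 2 := by
  have key : ‖f y - f x - (fderiv ℝ f x) (y - x)‖ ≤ (L * ‖y - x‖) * ‖y - x‖ := by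
    refine Convex.norm_image_sub_le_of_norm_hasFDerivWithin_le' (s := segment ℝ x y)
      (f' := fderiv ℝ f) (fun z _ => (hf z).hasFDerivAt.hasFDerivWithinAt) ?_ (convex_segment x y)
      (left_mem_segment ℝ x y) (right_mem_segment ℝ x y)
    intro z hz
    have hzS : z ∈ S := hS.segment_subset hx hy hz
    have h1 : ‖fderiv ℝ f z - fderiv ℝ f x‖ = ‖gradient f z - gradient f x‖ := by
      rw [← toDual_gradient, ← toDual_gradient, ← map_sub, LinearIsometryEquiv.norm_map]
    rw [h1]
    refine (hL z hzS x hx).trans ?_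
    gcongr
    obtain ⟨s, hs, rfl⟩ := (segment_eq_image' ℝ x y) ▸ hz
    simp only [add_sub_cancel_left, norm_smul, Real.norm_eq_abs, abs_of_nonneg hs.1]
    exact mul_le_of_le_one_left (norm_nonneg _) hs.2
  have h2 : (fderiv ℝ f x) (y - x) = inner ℝ (gradient f x) (y - x) := by
    rw [← toDual_gradient, InnerProductSpace.toDual_apply_apply]
  rw [h2, Real.norm_eq_abs] at key
  have := (abs_le.1 key).2
  nlinarith

theorem sgl_abel {E : Type*} [NormedAddCommGroup E] [NormedSpace ℝ E]
    (w : ℕ → ℝ) (y : ℕ → E) (n m : ℕ) (hnm : n ≤ m) (N : ℝ)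
    (hw0 : ∀ i, n ≤ i → 0 ≤ w i) (hw : ∀ i, n ≤ i → w (i + 1) ≤ w i)
    (hN : ∀ j, n ≤ j → j ≤ m → ‖∑ i ∈ Finset.Ico n j, y i‖ ≤ N) :
    ‖∑ i ∈ Finset.Ico n m, w i • y i‖ ≤ w n * N := by
  have claim : ∀ j, n ≤ j → j ≤ m →
      ‖∑ i ∈ Finset.Ico n j, w i • y i - w j • ∑ i ∈ Finset.Ico n j, y i‖ ≤ (w n - w j) * N := by
    intro j hj
    induction j, hj using Nat.le_induction with
    | base => intro _; simp
    | succ j hj ih =>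
      intro hjm
      have h1 := ih (by omega)
      have h2 := hN (j + 1) (by omega) hjm
      have h3 : ∑ i ∈ Finset.Ico n (j + 1), w i • y i - w (j + 1) • ∑ i ∈ Finset.Ico n (j + 1), y i
          = (∑ i ∈ Finset.Ico n j, w i • y i - w j • ∑ i ∈ Finset.Ico n j, y i)
            + (w j - w (j + 1)) • ∑ i ∈ Finset.Ico n (j + 1), y i := by
        rw [Finset.sum_Ico_succ_top hj, Finset.sum_Ico_succ_top hj]
        module
      rw [h3]
      refine (norm_add_le _ _).trans ?_
      rw [norm_smul, Real.norm_eq_abs, abs_of_nonneg (sub_nonneg.2 (hw j hj))]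
      have := mul_le_mul_of_nonneg_left h2 (sub_nonneg.2 (hw j hj))
      linarith
  have h1 := claim m hnm le_rfl
  have h2 := hN m hnm le_rfl
  have h3 : ∑ i ∈ Finset.Ico n m, w i • y i = (∑ i ∈ Finset.Ico n m, w i • y i -
      w m • ∑ i ∈ Finset.Ico n m, y i) + w m • ∑ i ∈ Finset.Ico n m, y i := by abel
  rw [h3]
  refine (norm_add_le _ _).trans ?_
  rw [norm_smul, Real.norm_eq_abs, abs_of_nonneg (hw0 m hnm)]
  have := mul_le_mul_of_nonneg_left h2 (hw0 m hnm)
  linarith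

theorem sgl_step {E : Type*} [NormedAddCommGroup E] [InnerProductSpace ℝ E] [CompleteSpace E]
    {f : E → ℝ} (hf : Differentiable ℝ f) {S : Set E} (hS : Convex ℝ S) {L : ℝ} (hL0 : 0 ≤ L)
    (hL : ∀ x ∈ S, ∀ y ∈ S, ‖gradient f x - gradient f y‖ ≤ L * ‖x - y‖)
    (α : ℕ → ℝ) (hα : ∀ n, 0 < α n) (x z : ℕ → E) (hx : ∀ n, x n ∈ S)
    (hrec : ∀ n, x (n + 1) = x n - α n • (gradient f (x n) + z n))
    (n k : ℕ) (hnk : n ≤ k) (e t : ℝ) (he : 0 ≤ e) (ht : 0 < t) (htL : t * L ≤ 1 / 80)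
    (hs1 : t / 2 ≤ ∑ i ∈ Finset.Ico n k, α i) (hs2 : ∑ i ∈ Finset.Ico n k, α i ≤ t)
    (hz : ∀ j, n ≤ j → j ≤ k → ‖∑ i ∈ Finset.Ico n j, α i • z i‖ ≤ e) :
    f (x k) ≤ f (x n) - t / 4 * ‖gradient f (x n)‖ ^ 2 + (8 / t + 8 * L) * e ^ 2 := by
  set g := gradient f (x n) with hg
  set G := ‖g‖ with hG
  have hG0 : 0 ≤ G := norm_nonneg _
  set D := 2 * (t * G + e) with hD
  have hD0 : 0 ≤ D := by positivity
  have htel : ∀ j, n ≤ j → x j - x n = - ∑ i ∈ Finset.Ico n j, α i • gradient f (x i)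
      - ∑ i ∈ Finset.Ico n j, α i • z i := by
    intro j hj
    induction j, hj using Nat.le_induction with
    | base => simp
    | succ j hj ih =>
      rw [Finset.sum_Ico_succ_top hj, Finset.sum_Ico_succ_top hj, hrec j,
        show x j - α j • (gradient f (x j) + z j) - x n
          = (x j - x n) - α j • (gradient f (x j) + z j) by abel, ih]
      module
  have hsj : ∀ j, j ≤ k → ∑ i ∈ Finset.Ico n j, α i ≤ t := fun j hj =>
    (Finset.sum_le_sum_of_subset_of_nonneg (Finset.Ico_subset_Ico_right hj)
      (fun i _ _ => (hα i).le)).trans hs2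
  have hdist : ∀ j, n ≤ j → j ≤ k → ‖x j - x n‖ ≤ D := by
    intro j
    induction j using Nat.strong_induction_on with
    | _ j ih =>
      intro hj hjk
      rw [htel j hj]
      refine (norm_sub_le _ _).trans ?_
      rw [norm_neg]
      have h1 : ‖∑ i ∈ Finset.Ico n j, α i • gradient f (x i)‖ ≤ t * (G + L * D) := by
        calc _ ≤ ∑ i ∈ Finset.Ico n j, α i * (G + L * D) := by
              refine norm_sum_le_of_le _ fun i hi => ?_
              rw [Finset.mem_Ico] at hi
              rw [norm_smul, Real.norm_eq_abs, abs_of_pos (hα i)]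
              refine mul_le_mul_of_nonneg_left ?_ (hα i).le
              have h2 := hL (x i) (hx i) (x n) (hx n)
              have h3 := ih i hi.2 hi.1 (by omega)
              have h4 : ‖gradient f (x i)‖ ≤ ‖g‖ + ‖gradient f (x i) - g‖ := norm_le_norm_add_norm_sub' _ _
              have h5 := mul_le_mul_of_nonneg_left h3 hL0
              linarith
          _ = (∑ i ∈ Finset.Ico n j, α i) * (G + L * D) := by rw [Finset.sum_mul]
          _ ≤ _ := mul_le_mul_of_nonneg_right (hsj j hjk) (by positivity)
      have h2 := hz j hj hjk
      have h3 : t * L * D ≤ 1 / 80 * D := mul_le_mul_of_nonneg_right htL hD0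
      have h4 : t * (G + L * D) = t * G + t * L * D := by ring
      linarith
  set s := ∑ i ∈ Finset.Ico n k, α i with hs
  set R : E := ∑ i ∈ Finset.Ico n k, α i • (gradient f (x i) - g) with hR
  have hRn : ‖R‖ ≤ t * L * D := by
    calc _ ≤ ∑ i ∈ Finset.Ico n k, α i * (L * D) := by
          refine norm_sum_le_of_le _ fun i hi => ?_
          rw [Finset.mem_Ico] at hi
          rw [norm_smul, Real.norm_eq_abs, abs_of_pos (hα i)]
          refine mul_le_mul_of_nonneg_left ?_ (hα i).le
          exact (hL (x i) (hx i) (x n) (hx n)).trans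
            (mul_le_mul_of_nonneg_left (hdist i hi.1 hi.2.le) hL0)
      _ = s * (L * D) := by rw [Finset.sum_mul]
      _ ≤ t * (L * D) := mul_le_mul_of_nonneg_right hs2 (by positivity)
      _ = _ := by ring
  have hxk : x k - x n = -(s • g) - R - ∑ i ∈ Finset.Ico n k, α i • z i := by
    rw [htel k hnk, hR, hs]
    simp only [smul_sub, Finset.sum_sub_distrib, Finset.sum_smul]
    abel
  have hd := sgl_descent hf hS hL0 hL (hx n) (hx k)
  rw [← hg] at hd
  have hin : inner ℝ g (x k - x n) ≤ - s * G ^ 2 + G * (t * L * D) + G * e := by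
    rw [hxk, inner_sub_right, inner_sub_right, inner_neg_right, inner_smul_right,
      real_inner_self_eq_norm_sq]
    have h1 := (abs_le.1 (abs_real_inner_le_norm g R)).1
    have h2 := (abs_le.1 (abs_real_inner_le_norm g (∑ i ∈ Finset.Ico n k, α i • z i))).1
    have h3 := mul_le_mul_of_nonneg_left hRn hG0
    have h4 := mul_le_mul_of_nonneg_left (hz k hnk le_rfl) hG0
    linarith
  have hD2 : ‖x k - x n‖ ^ 2 ≤ D ^ 2 := by
    have := hdist k hnk le_rfl
    gcongr
  have hD3 : D ^ 2 ≤ 8 * (t * G) ^ 2 + 8 * e ^ 2 := by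
    rw [hD]; nlinarith [sq_nonneg (t * G - e)]
  have h5 : L * ‖x k - x n‖ ^ 2 ≤ L * (8 * (t * G) ^ 2 + 8 * e ^ 2) :=
    mul_le_mul_of_nonneg_left (hD2.trans hD3) hL0
  have h6 : t * L * (t * G ^ 2) ≤ 1 / 80 * (t * G ^ 2) :=
    mul_le_mul_of_nonneg_right htL (by positivity)
  have h7 : t * L * (G * e) ≤ 1 / 80 * (G * e) :=
    mul_le_mul_of_nonneg_right htL (by positivity)
  have h8 : t / 2 * G ^ 2 ≤ s * G ^ 2 := mul_le_mul_of_nonneg_right hs1 (by positivity)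
  have h9 : 2 * (G * e) ≤ t / 8 * G ^ 2 + 8 / t * e ^ 2 := by
    have : t / 8 * G ^ 2 + 8 / t * e ^ 2 - 2 * (G * e) = (t * G - 8 * e) ^ 2 / (8 * t) := by
      field_simp; ring
    have h' : 0 ≤ (t * G - 8 * e) ^ 2 / (8 * t) := by positivity
    linarith
  have h10 : 0 ≤ G * e := by positivity
  have e1 : G * (t * L * D) = 2 * (t * L * (t * G ^ 2)) + 2 * (t * L * (G * e)) := by
    rw [hD]; ring
  have e2 : L * (8 * (t * G) ^ 2 + 8 * e ^ 2) = 8 * (t * L * (t * G ^ 2)) + 8 * L * e ^ 2 := by ring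
  rw [e1] at hin
  rw [e2] at h5
  linarith

/-- decay of sequences `U (j+1) ≤ U j - η U j ^ (1+q)`. -/
theorem sgl_seq (U : ℕ → ℝ) (η q : ℝ) (hq : 0 < q) (hη : 0 < η) (hU : ∀ j, 0 < U j)
    (h : ∀ j, U (j + 1) ≤ U j - η * U j ^ (1 + q)) (j : ℕ) : q * η * j ≤ U j ^ (-q) := by
  induction j with
  | zero => simpa using Real.rpow_nonneg (hU 0).le _
  | succ j ih =>
    have h0 := hU j
    have hxq : 0 < U j ^ q := Real.rpow_pos_of_pos h0 _
    have h1 : U (j + 1) ≤ U j * Real.exp (-(η * U j ^ q)) := by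
      have h2 := Real.add_one_le_exp (-(η * U j ^ q))
      have h3 := mul_le_mul_of_nonneg_left h2 h0.le
      have h4 := h j
      rw [Real.rpow_add h0, Real.rpow_one] at h4
      linarith
    have h5 : (U j * Real.exp (-(η * U j ^ q))) ^ (-q) ≤ U (j + 1) ^ (-q) :=
      Real.rpow_le_rpow_of_nonpos (hU _) h1 (by linarith)
    rw [Real.mul_rpow h0.le (Real.exp_pos _).le, ← Real.exp_mul] at h5
    have h6 := Real.add_one_le_exp (-(η * U j ^ q) * -q)
    have hpos : 0 < U j ^ (-q) := Real.rpow_pos_of_pos h0 _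
    have h7 := mul_le_mul_of_nonneg_left h6 hpos.le
    have h8 : U j ^ (-q) * U j ^ q = 1 := by
      rw [← Real.rpow_add h0]; simp
    have h9 : U j ^ (-q) * (-(η * U j ^ q) * -q + 1) = q * η + U j ^ (-q) := by
      linear_combination q * η * h8
    push_cast
    linarith

theorem sgl_contra (U T : ℕ → ℝ) (η q p c t T0 : ℝ) (hq : 0 < q) (hη : 0 < η) (hp : 0 < p)
    (hc : 0 < c) (ht : 0 < t) (hU : ∀ j, 0 < U j)
    (h : ∀ j, U (j + 1) ≤ U j - η * U j ^ (1 + q))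
    (hT0 : 0 < T0) (hTpos : ∀ j, 0 < T j) (hT : ∀ j : ℕ, T j ≤ T0 + t * j)
    (hUT : ∀ j, c * T j ^ (-p) ≤ U j)
    (hpq : p * q < 1 ∨ (p * q = 1 ∧ c ^ (-q) * t < q * η)) : False := by
  have h1 : ∀ j : ℕ, q * η * j ≤ c ^ (-q) * (T0 + t * j) ^ (p * q) := by
    intro j
    refine (sgl_seq U η q hq hη hU h j).trans ?_
    have hTp : 0 < T j ^ (-p) := Real.rpow_pos_of_pos (hTpos j) _
    have h2 : U j ^ (-q) ≤ (c * T j ^ (-p)) ^ (-q) :=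
      Real.rpow_le_rpow_of_nonpos (by positivity) (hUT j) (by linarith)
    refine h2.trans ?_
    rw [Real.mul_rpow hc.le hTp.le, ← Real.rpow_mul (hTpos j).le, neg_mul_neg]
    have h3 := Real.rpow_le_rpow (hTpos j).le (hT j) (z := p * q) (by positivity)
    have h4 : 0 < c ^ (-q) := Real.rpow_pos_of_pos hc _
    gcongr
  have hcq : 0 < c ^ (-q) := Real.rpow_pos_of_pos hc _
  have hy : Tendsto (fun j : ℕ => T0 + t * (j : ℝ)) atTop atTop :=
    tendsto_atTop_add_const_left _ _ (tendsto_natCast_atTop_atTop.const_mul_atTop ht)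
  have h2 : ∀ j : ℕ, q * η / t * (1 - T0 / (T0 + t * j)) ≤ c ^ (-q) * (T0 + t * j) ^ (p * q - 1) := by
    intro j
    have hyj : 0 < T0 + t * (j : ℝ) := by positivity
    rw [Real.rpow_sub_one hyj.ne', ← mul_div_assoc, le_div_iff₀ hyj]
    have := h1 j
    have e : q * η / t * (1 - T0 / (T0 + t * j)) * (T0 + t * j) = q * η * j := by
      field_simp; ring
    rw [e]; exact this
  have l1 : Tendsto (fun j : ℕ => q * η / t * (1 - T0 / (T0 + t * j))) atTop
      (nhds (q * η / t * (1 - 0))) :=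
    (tendsto_const_nhds.sub (tendsto_const_nhds.div_atTop hy)).const_mul _
  have hpos : 0 < q * η / t := by positivity
  rcases hpq with hlt | ⟨heq, hlt⟩
  · have l2 : Tendsto (fun j : ℕ => c ^ (-q) * (T0 + t * j) ^ (p * q - 1)) atTop
        (nhds (c ^ (-q) * 0)) := by
      refine Tendsto.const_mul _ ?_
      have := (tendsto_rpow_neg_atTop (y := 1 - p * q) (by linarith)).comp hy
      simpa [Function.comp_def] using this
    have := le_of_tendsto_of_tendsto' l1 l2 h2
    linarith
  · have := le_of_tendsto' l1 (b := c ^ (-q)) (fun j => (h2 j).trans (by simp [heq]))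
    rw [sub_zero, mul_one, div_le_iff₀ ht] at this
    linarith

theorem sgl_key {E : Type*} [NormedAddCommGroup E] [InnerProductSpace ℝ E] [CompleteSpace E]
    {f : E → ℝ} (hf : Differentiable ℝ f) {S : Set E} (hS : Convex ℝ S) {L : ℝ} (hL0 : 0 ≤ L)
    (hL : ∀ x ∈ S, ∀ y ∈ S, ‖gradient f x - gradient f y‖ ≤ L * ‖x - y‖)
    (α : ℕ → ℝ) (hα : ∀ n, 0 < α n) (hα0 : Tendsto α atTop (nhds 0))
    (γ : ℕ → ℝ) (hγ : ∀ n, γ n = ∑ i ∈ Finset.range n, α i) (hγt : Tendsto γ atTop atTop)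
    (x z : ℕ → E) (hx : ∀ n, x n ∈ S)
    (hrec : ∀ n, x (n + 1) = x n - α n • (gradient f (x n) + z n))
    (r B : ℝ) (hr : 1 < r) (hB0 : 0 ≤ B)
    (hB : ∀ᶠ n in atTop, ∀ k, n ≤ k → γ (k + 1) - γ n ≤ 1 →
      ‖∑ i ∈ Finset.Ico n (k + 1), (α i * γ i ^ r) • z i‖ ≤ B)
    (Q : Set E) (fh δ μ M : ℝ) (hδ : 0 < δ) (hδ1 : δ ≤ 1) (hμ : 1 < μ) (hM : 1 ≤ M)
    (hLoj : ∀ y ∈ Q, |f y - fh| ≤ δ → |f y - fh| ≤ M * ‖gradient f y‖ ^ μ)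
    (hxQ : ∀ᶠ n in atTop, x n ∈ Q) (hlim : ∃ᶠ n in atTop, f (x n) < fh + δ)
    (t : ℝ) (ht : 0 < t) (ht1 : t ≤ 1) (htL : t * L ≤ 1 / 80)
    (p q c : ℝ) (hp : 0 < p) (hpr : p ≤ μ * r) (hq : 0 < q) (hqμ : 2 / μ ≤ 1 + q) (hc : 0 < c)
    (hcB : (8 / t + 8 * L) * B ^ 2 ≤ t / 8 * (c / M) ^ (2 / μ))
    (hpq : p * q < 1 ∨ (p * q = 1 ∧ c ^ (-q) * t < q * (t / 8 * (1 / M) ^ (2 / μ)))) :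
    ∃ᶠ n in atTop, γ n ^ p * (f (x n) - fh) ≤ c := by
  by_contra hcon
  rw [not_frequently] at hcon
  obtain ⟨N, hN⟩ := eventually_atTop.1 (hcon.and (hB.and (hxQ.and
    ((hγt.eventually_ge_atTop 1).and (hα0.eventually_le_const (by positivity : 0 < t / 2))))))
  have hM0 : 0 < M := by linarith
  set η := t / 8 * (1 / M) ^ (2 / μ) with hηdef
  have hη : 0 < η := by positivity
  have hsum : ∀ n k, n ≤ k → ∑ i ∈ Finset.Ico n k, α i = γ k - γ n := by
    intro n k hnk
    rw [hγ, hγ, Finset.sum_Ico_eq_sub _ hnk]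
  have hγmono : Monotone γ := by
    refine monotone_nat_of_le_succ fun n => ?_
    rw [hγ, hγ, Finset.sum_range_succ]
    linarith [hα n]
  have hlow : ∀ n, N ≤ n → c * γ n ^ (-p) ≤ f (x n) - fh := by
    intro n hn
    obtain ⟨h1, -, -, h2, -⟩ := hN n hn
    have hg : 0 < γ n := by linarith
    have hgp : 0 < γ n ^ p := Real.rpow_pos_of_pos hg _
    rw [Real.rpow_neg hg.le, ← div_eq_mul_inv, div_le_iff₀ hgp]
    push Not at h1
    linarith
  have hstep : ∀ n, N ≤ n ∧ f (x n) - fh ≤ δ → ∃ k, (N ≤ k ∧ f (x k) - fh ≤ δ) ∧ γ k ≤ γ n + t ∧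
      f (x k) - fh ≤ (f (x n) - fh) - η * (f (x n) - fh) ^ (1 + q) := by
    rintro n ⟨hn, hnδ⟩
    obtain ⟨-, hBn, hQn, hγ1, hαn⟩ := hN n hn
    have hex : ∃ k, t / 2 ≤ γ k - γ n := by
      obtain ⟨k, hk⟩ := (hγt.eventually_ge_atTop (γ n + t / 2)).exists
      exact ⟨k, by linarith⟩
    classical
    set k := Nat.find hex with hk
    have hk1 : t / 2 ≤ γ k - γ n := Nat.find_spec hex
    have hnk : n < k := by
      by_contra hle
      have := hγmono (not_lt.1 hle)
      linarith
    have hk2 : γ k - γ n ≤ t := by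
      have h1 : ¬ (t / 2 ≤ γ (k - 1) - γ n) := Nat.find_min hex (by omega)
      have h2 : γ k = γ (k - 1) + α (k - 1) := by
        have : k = (k - 1) + 1 := by omega
        rw [hγ k, hγ (k - 1)]
        conv_lhs => rw [this, Finset.sum_range_succ]
      have h3 := (hN (k - 1) (by omega)).2.2.2.2
      push Not at h1
      linarith
    have hg : 0 < γ n := by linarith
    have hgi : ∀ i, n ≤ i → 0 < γ i := fun i hi => hg.trans_le (hγmono hi)
    set w : ℕ → ℝ := fun i => (γ i ^ r)⁻¹ with hw
    have hz : ∀ j, n ≤ j → j ≤ k → ‖∑ i ∈ Finset.Ico n j, α i • z i‖ ≤ w n * B := by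
      intro j hj hjk
      have h1 : ∑ i ∈ Finset.Ico n j, α i • z i
          = ∑ i ∈ Finset.Ico n j, w i • ((α i * γ i ^ r) • z i) := by
        refine Finset.sum_congr rfl fun i hi => ?_
        have : 0 < γ i ^ r := Real.rpow_pos_of_pos (hgi i (Finset.mem_Ico.1 hi).1) _
        rw [smul_smul, hw]
        congr 1
        field_simp
      rw [h1]
      refine sgl_abel w _ n j hj B (fun i hi => ?_) (fun i hi => ?_) (fun l hl hlj => ?_)
      · have := hgi i hi
        positivity
      · have h1 := hgi i hi
        have h2 : γ i ≤ γ (i + 1) := hγmono (Nat.le_succ i)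
        simp only [hw]
        have h3 : 0 < γ i ^ r := Real.rpow_pos_of_pos h1 _
        have h4 : γ i ^ r ≤ γ (i + 1) ^ r := Real.rpow_le_rpow h1.le h2 (by linarith)
        exact inv_anti₀ h3 h4
      · rcases hl.eq_or_lt with rfl | hl
        · simpa using hB0
        · obtain ⟨l, rfl⟩ : ∃ l', l = l' + 1 := ⟨l - 1, by omega⟩
          refine hBn l (by omega) ?_
          have : γ (l + 1) ≤ γ k := hγmono (by omega)
          linarith
    have hwn : 0 < w n := by
      have : 0 < γ n ^ r := Real.rpow_pos_of_pos hg _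
      simp only [hw]; positivity
    have hmain := sgl_step hf hS hL0 hL α hα x z hx hrec n k hnk.le (w n * B) t (by positivity) ht htL
      (by rw [hsum n k hnk.le]; exact hk1) (by rw [hsum n k hnk.le]; exact hk2) hz
    have hl := hlow n hn
    have hgp : 0 < γ n ^ (-p) := Real.rpow_pos_of_pos hg _
    set u := f (x n) - fh with hu
    have hu0 : 0 < u := lt_of_lt_of_le (by positivity) hl
    have habs : |u| = u := abs_of_pos hu0
    have hLn := hLoj (x n) hQn (by rw [← hu, habs]; exact hnδ)
    rw [← hu, habs] at hLn
    set G := ‖gradient f (x n)‖ with hG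
    have hG0 : 0 ≤ G := norm_nonneg _
    have hμ0 : 0 < μ := by linarith
    have hμ2 : 0 < 2 / μ := by positivity
    have hG2 : (u / M) ^ (2 / μ) ≤ G ^ 2 := by
      have h1 : u / M ≤ G ^ μ := by rw [div_le_iff₀ hM0]; linarith
      have h2 := Real.rpow_le_rpow (by positivity) h1 hμ2.le
      rw [← Real.rpow_mul hG0, mul_div_cancel₀ _ hμ0.ne'] at h2
      exact_mod_cast h2
    have hnz : (8 / t + 8 * L) * (w n * B) ^ 2 ≤ t / 8 * (u / M) ^ (2 / μ) := by
      have h1 : (c * γ n ^ (-p) / M) ^ (2 / μ) ≤ (u / M) ^ (2 / μ) := by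
        apply Real.rpow_le_rpow (by positivity) _ hμ2.le
        gcongr
      have h2 : (c * γ n ^ (-p) / M) ^ (2 / μ) = (c / M) ^ (2 / μ) * γ n ^ (-(p * (2 / μ))) := by
        rw [show c * γ n ^ (-p) / M = c / M * γ n ^ (-p) by ring,
          Real.mul_rpow (by positivity) hgp.le, ← Real.rpow_mul hg.le, neg_mul]
      have h3 : w n ^ 2 ≤ γ n ^ (-(p * (2 / μ))) := by
        have : w n ^ 2 = γ n ^ (-(2 * r)) := by
          simp only [hw]
          rw [← Real.rpow_neg hg.le, ← Real.rpow_natCast, ← Real.rpow_mul hg.le]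
          congr 1; push_cast; ring
        rw [this]
        apply Real.rpow_le_rpow_of_exponent_le hγ1
        have h4 : p * (2 / μ) ≤ μ * r * (2 / μ) := mul_le_mul_of_nonneg_right hpr hμ2.le
        have h5 : μ * r * (2 / μ) = 2 * r := by field_simp
        linarith
      calc (8 / t + 8 * L) * (w n * B) ^ 2 = ((8 / t + 8 * L) * B ^ 2) * w n ^ 2 := by ring
        _ ≤ (t / 8 * (c / M) ^ (2 / μ)) * γ n ^ (-(p * (2 / μ))) := by gcongr
        _ = t / 8 * (c * γ n ^ (-p) / M) ^ (2 / μ) := by rw [h2]; ring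
        _ ≤ _ := by gcongr
    have hfin : η * u ^ (1 + q) ≤ t / 8 * (u / M) ^ (2 / μ) := by
      rw [hηdef, show u / M = 1 / M * u by ring, Real.mul_rpow (by positivity) hu0.le, ← mul_assoc]
      have := Real.rpow_le_rpow_of_exponent_ge hu0 (hnδ.trans hδ1) hqμ
      gcongr
    have hconc : f (x k) - fh ≤ u - η * u ^ (1 + q) := by
      have : t / 4 * (u / M) ^ (2 / μ) ≤ t / 4 * G ^ 2 := by gcongr
      linarith
    have hnn : 0 ≤ η * u ^ (1 + q) := by positivity
    exact ⟨k, ⟨by omega, by linarith⟩, by linarith, hconc⟩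
  obtain ⟨n0, hn0, hn0N⟩ := (hlim.and_eventually (eventually_ge_atTop N)).exists
  choose! nx hnx1 hnx2 hnx3 using hstep
  set s : ℕ → ℕ := fun j => nx^[j] n0 with hs
  have hsucc : ∀ j, s (j + 1) = nx (s j) := fun j => Function.iterate_succ_apply' _ _ _
  have hinv : ∀ j, N ≤ s j ∧ f (x (s j)) - fh ≤ δ := by
    intro j
    induction j with
    | zero => exact ⟨hn0N, by simp only [hs, Function.iterate_zero, id]; linarith⟩
    | succ j ih => rw [hsucc]; exact hnx1 _ ih
  have hγs : ∀ j, 0 < γ (s j) := fun j => by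
    have := (hN _ (hinv j).1).2.2.2.1
    linarith
  refine sgl_contra (fun j => f (x (s j)) - fh) (fun j => γ (s j)) η q p c t (γ n0) hq hη hp hc ht
    (fun j => ?_) (fun j => ?_) (hγs 0) hγs (fun j => ?_) (fun j => hlow _ (hinv j).1) hpq
  · refine lt_of_lt_of_le ?_ (hlow _ (hinv j).1)
    have : 0 < γ (s j) ^ (-p) := Real.rpow_pos_of_pos (hγs j) _
    positivity
  · simp only [hsucc]
    exact hnx3 _ (hinv j)
  · induction j with
    | zero => simp [hs]
    | succ j ih =>
      have := hnx2 _ (hinv j)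
      simp only [hsucc]
      push_cast
      linarith



/-- Lemma 1.6 of the paper: under Assumptions 1.1, 1.2, 1.3
there is a random variable `Ĉ₆ ∈ [1,∞)` such that, almost surely on `Λ`, for
every `ε > 0`: `liminf_n γ_n^p̂ u(θ_n) ≤ Ĉ₆ (φ_ε(ξ))^μ̂`.
(`liminf u ≤ c` is expressed as: for every `c' > c`, `u n ≤ c'` frequently.) -/
theorem stochastic_gradient_liminf_bound
    {d : ℕ} (hd : 1 ≤ d)
    {Ω : Type} [MeasurableSpace Ω] (P : Measure Ω) [IsProbabilityMeasure P]
    (f : EuclideanSpace ℝ (Fin d) → ℝ)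
    (hfd : Differentiable ℝ f)
    (hlip : LocallyLipschitz (fun x => gradient f x))
    (α : ℕ → ℝ) (hαpos : ∀ n, 0 < α n)
    (θ ξ : ℕ → Ω → EuclideanSpace ℝ (Fin d))
    (hrec : ∀ n ω, θ (n + 1) ω = θ n ω - α n • (gradient f (θ n ω) + ξ n ω))
    -- Assumption 1.1
    (hα0 : Tendsto α atTop (nhds 0))
    (γ : ℕ → ℝ) (hγ : ∀ n, γ n = ∑ i ∈ Finset.range n, α i)
    (hαdiv : Tendsto γ atTop atTop)
    -- the interpolation index `a(n,t)`
    (a : ℕ → ℝ → ℕ)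
    (ha : ∀ n t, 0 < t → a n t = sSup {k | n ≤ k ∧ γ k - γ n ≤ t})
    -- the event Λ
    (Λ : Set Ω) (hΛ : Λ = {ω | ∃ C, ∀ n, ‖θ n ω‖ ≤ C})
    -- Assumption 1.2
    (r : ℝ) (hr : 1 < r)
    (noise : ℕ → Ω → ℝ)
    (hnoise : ∀ n ω, noise n ω =
      ⨆ k ∈ Set.Ico n (a n 1), ‖∑ i ∈ Finset.Icc n k, (α i * γ i ^ r) • ξ i ω‖)
    (hA12 : ∀ᵐ ω ∂P, ω ∈ Λ → IsBoundedUnder (· ≤ ·) atTop (fun n => noise n ω))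
    (Xi : Ω → ℝ) (hXi : ∀ ω, Xi ω = Filter.limsup (fun n => noise n ω) atTop)
    -- Assumption 1.3 (Łojasiewicz-type gradient inequality, with a choice
    -- `δ_{Q,a}, μ_{Q,a}, M_{Q,a}` of the Łojasiewicz data for each compact `Q`
    -- and each value `a ∈ f(Q)`)
    (δQ μQ MQ : Set (EuclideanSpace ℝ (Fin d)) → ℝ → ℝ)
    (hLoj : ∀ Q : Set (EuclideanSpace ℝ (Fin d)), IsCompact Q → ∀ b ∈ f '' Q,
      δQ Q b ∈ Set.Ioc (0 : ℝ) 1 ∧ μQ Q b ∈ Set.Ioc (1 : ℝ) 2 ∧ 1 ≤ MQ Q b ∧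
      ∀ x ∈ Q, |f x - b| ≤ δQ Q b → |f x - b| ≤ MQ Q b * ‖gradient f x‖ ^ μQ Q b)
    -- the local Łojasiewicz data `δ_θ, μ_θ, M_θ` provided by Assumption 1.3
    (δl μl Ml : EuclideanSpace ℝ (Fin d) → ℝ)
    (hδl : ∀ x, δl x ∈ Set.Ioc (0 : ℝ) 1)
    (hμl : ∀ x, μl x ∈ Set.Ioc (1 : ℝ) 2)
    (hMl : ∀ x, 1 ≤ Ml x)
    (hLocal : ∀ x y, ‖y - x‖ ≤ δl x → |f y - f x| ≤ Ml x * ‖gradient f y‖ ^ μl x)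
    -- `f̂ = liminf_n f(θ_n)`
    (fhat : Ω → ℝ)
    (hfhat : ∀ ω, fhat ω = Filter.liminf (fun n => f (θ n ω)) atTop)
    -- `Â` = set of accumulation points of `{θ_n}`, and
    -- `Q̂ = cl(⋃_{θ ∈ Â} {θ' : ‖θ' − θ‖ ≤ δ_θ/2})`
    (Ahat : Ω → Set (EuclideanSpace ℝ (Fin d)))
    (hAhat : ∀ ω, Ahat ω = {x | MapClusterPt x atTop (fun n => θ n ω)})
    (Qhat : Ω → Set (EuclideanSpace ℝ (Fin d)))
    (hQhat : ∀ ω, Qhat ω = closure (⋃ x ∈ Ahat ω, Metric.closedBall x (δl x / 2)))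
    -- `μ̂ = μ_{Q̂,f̂}`, `r̂ = 1/(2−μ̂)` (`= ∞` if `μ̂ = 2`), `p̂ = μ̂ min{r,r̂}`
    (μhat : Ω → ℝ) (hμhat : ∀ ω, μhat ω = μQ (Qhat ω) (fhat ω))
    (phat : Ω → ℝ)
    (hphat : ∀ ω, phat ω =
      μhat ω * (if μhat ω < 2 then min r (1 / (2 - μhat ω)) else r))
    -- `φ_ε(ξ) = φ(ξ) + ε` where `φ(ξ) = ξ` if `r < r̂`, `1 + ξ` if `r = r̂`,
    -- and `1` if `r > r̂`
    (φe : Ω → ℝ → ℝ)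
    (hφe : ∀ ω ε, φe ω ε =
      (if μhat ω = 2 ∨ r < 1 / (2 - μhat ω) then Xi ω
        else if r = 1 / (2 - μhat ω) then 1 + Xi ω else 1) + ε) :
    ∃ C₆ : Ω → ℝ, (∀ ω, 1 ≤ C₆ ω) ∧
      ∀ᵐ ω ∂P, ω ∈ Λ → ∀ ε : ℝ, 0 < ε →
        ∀ c : ℝ, C₆ ω * φe ω ε ^ μhat ω < c →
          ∃ᶠ n in atTop, γ n ^ phat ω * (f (θ n ω) - fhat ω) ≤ c := by
  suffices H : ∀ᵐ ω ∂P, ω ∈ Λ → ∃ C : ℝ, 1 ≤ C ∧ ∀ ε : ℝ, 0 < ε →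
      ∀ c : ℝ, C * φe ω ε ^ μhat ω < c →
        ∃ᶠ n in atTop, γ n ^ phat ω * (f (θ n ω) - fhat ω) ≤ c by
    classical
    refine ⟨fun ω => if h : ∃ C : ℝ, 1 ≤ C ∧ ∀ ε : ℝ, 0 < ε →
      ∀ c : ℝ, C * φe ω ε ^ μhat ω < c →
        ∃ᶠ n in atTop, γ n ^ phat ω * (f (θ n ω) - fhat ω) ≤ c then h.choose else 1, ?_, ?_⟩
    · intro ω
      dsimp only
      split_ifs with h
      · exact h.choose_spec.1
      · exact le_rfl
    · filter_upwards [H] with ω hω hΛω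
      have h := hω hΛω
      simp only [dif_pos h]
      exact h.choose_spec.2
  filter_upwards [hA12] with ω hbdd0 hωΛ
  have hbdd := hbdd0 hωΛ
  rw [hΛ] at hωΛ
  obtain ⟨R, hR⟩ := hωΛ
  -- the Lipschitz constant on the ball
  have hSc : IsCompact (Metric.closedBall (0 : EuclideanSpace ℝ (Fin d)) R) :=
    isCompact_closedBall _ _
  have hxS : ∀ n, θ n ω ∈ Metric.closedBall (0 : EuclideanSpace ℝ (Fin d)) R := fun n => by
    simpa using hR n
  obtain ⟨L, hL⟩ := (hlip.locallyLipschitzOn (s := Metric.closedBall 0 R)).exists_lipschitzOnWith_of_compact hSc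
  -- boundedness of `f (θ n)`
  obtain ⟨F, hF⟩ := hSc.exists_bound_of_continuousOn hfd.continuous.continuousOn
  have hFn : ∀ n, |f (θ n ω)| ≤ F := fun n => hF _ (hxS n)
  have hbelow : IsBoundedUnder (· ≥ ·) atTop (fun n => f (θ n ω)) :=
    isBoundedUnder_of ⟨-F, fun n => (abs_le.1 (hFn n)).1⟩
  have habove : IsBoundedUnder (· ≤ ·) atTop (fun n => f (θ n ω)) :=
    isBoundedUnder_of ⟨F, fun n => (abs_le.1 (hFn n)).2⟩
  have hlim : ∀ e : ℝ, 0 < e → ∃ᶠ n in atTop, f (θ n ω) < fhat ω + e := by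
    intro e he
    refine frequently_lt_of_liminf_lt habove.isCoboundedUnder_ge ?_
    rw [← hfhat]; linarith
  have hlim' : ∀ e : ℝ, 0 < e → ∀ᶠ n in atTop, fhat ω - e < f (θ n ω) := by
    intro e he
    refine eventually_lt_of_lt_liminf ?_ hbelow
    rw [← hfhat]; linarith
  -- accumulation points
  have hAS : Ahat ω ⊆ Metric.closedBall 0 R := by
    intro y hy
    rw [hAhat] at hy
    exact Metric.isClosed_closedBall.mem_of_mapClusterPt hy (Eventually.of_forall hxS)
  have hballQ : ∀ y ∈ Ahat ω, Metric.closedBall y (δl y / 2) ⊆ Qhat ω := by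
    intro y hy
    rw [hQhat]
    exact (Set.subset_biUnion_of_mem (u := fun y => Metric.closedBall y (δl y / 2)) hy).trans
      subset_closure
  have hQc : IsCompact (Qhat ω) := by
    rw [hQhat]
    refine Metric.isCompact_of_isClosed_isBounded isClosed_closure (Bornology.IsBounded.closure ?_)
    refine (Metric.isBounded_closedBall (x := (0 : EuclideanSpace ℝ (Fin d))) (r := R + 1)).subset ?_
    refine Set.iUnion₂_subset fun y hy => ?_
    refine Metric.closedBall_subset_closedBall' ?_
    have h1 := hAS hy
    rw [Metric.mem_closedBall] at h1
    have h2 := (hδl y).2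
    have h3 := (hδl y).1
    linarith
  have hint : ∀ y ∈ Ahat ω, y ∈ interior (Qhat ω) := by
    intro y hy
    rw [mem_interior_iff_mem_nhds]
    exact mem_of_superset (Metric.closedBall_mem_nhds y (by have := (hδl y).1; positivity)) (hballQ y hy)
  have hxQ : ∀ᶠ n in atTop, θ n ω ∈ Qhat ω := by
    by_contra hcon
    rw [not_eventually] at hcon
    have hK : IsCompact (Metric.closedBall (0 : EuclideanSpace ℝ (Fin d)) R \ interior (Qhat ω)) :=
      hSc.diff isOpen_interior
    obtain ⟨y, hy, hyc⟩ := hK.exists_mapClusterPt_of_frequently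
      (hcon.mono fun n hn => ⟨hxS n, fun h => hn (interior_subset h)⟩)
    exact hy.2 (hint y (by rw [hAhat]; exact hyc))
  have hfhatQ : fhat ω ∈ f '' Qhat ω := by
    have hcl : MapClusterPt (fhat ω) atTop (fun n => f (θ n ω)) := by
      rw [Metric.nhds_basis_ball.mapClusterPt_iff_frequently]
      intro e he
      refine ((hlim e he).and_eventually (hlim' e he)).mono fun n hn => ?_
      rw [Metric.mem_ball, Real.dist_eq, abs_lt]
      constructor <;> linarith [hn.1, hn.2]
    obtain ⟨ψ, hψ, hψt⟩ := hcl.tendsto_subseq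
    obtain ⟨y, -, χ, hχ, hχt⟩ := hSc.tendsto_subseq (fun n => hxS (ψ n))
    have hyA : y ∈ Ahat ω := by
      rw [hAhat]
      exact MapClusterPt.of_comp (hψ.comp hχ).tendsto_atTop hχt.mapClusterPt
    refine ⟨y, interior_subset (hint y hyA), ?_⟩
    exact tendsto_nhds_unique ((hfd.continuous.tendsto y).comp hχt) (hψt.comp hχ.tendsto_atTop)
  obtain ⟨⟨hδ0, hδ1⟩, ⟨hμ1, hμ2⟩, hM1, hLj⟩ := hLoj _ hQc _ hfhatQ
  rw [← hμhat] at hμ1 hμ2 hLj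
  set μ := μhat ω with hμdef
  set M := MQ (Qhat ω) (fhat ω) with hMdef
  set δ := δQ (Qhat ω) (fhat ω) with hδdef
  set p := phat ω with hpdef
  -- the noise
  have hafin : ∀ n, BddAbove {k | n ≤ k ∧ γ k - γ n ≤ 1} := by
    intro n
    obtain ⟨K, hK⟩ := eventually_atTop.1 (hαdiv.eventually_gt_atTop (γ n + 1))
    refine ⟨K, fun k hk => ?_⟩
    by_contra hlt
    have h1 := hK k (not_le.1 hlt).le
    have h2 := hk.2
    linarith
  have hnz : ∀ n k, n ≤ k → γ (k + 1) - γ n ≤ 1 →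
      ‖∑ i ∈ Finset.Ico n (k + 1), (α i * γ i ^ r) • ξ i ω‖ ≤ noise n ω := by
    intro n k hnk hk
    have hka : k + 1 ≤ a n 1 := by
      rw [ha n 1 one_pos]
      exact le_csSup (hafin n) ⟨by omega, hk⟩
    rw [hnoise, Finset.Ico_add_one_right_eq_Icc]
    have hmem : k ∈ Set.Ico n (a n 1) := ⟨hnk, by omega⟩
    have hin : ∀ k, BddAbove (Set.range fun _ : k ∈ Set.Ico n (a n 1) =>
        ‖∑ i ∈ Finset.Icc n k, (α i * γ i ^ r) • ξ i ω‖) := fun k => (Set.finite_range _).bddAbove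
    have hout : BddAbove (Set.range fun k => ⨆ _ : k ∈ Set.Ico n (a n 1),
        ‖∑ i ∈ Finset.Icc n k, (α i * γ i ^ r) • ξ i ω‖) := by
      have hfin : (Set.range fun k => ⨆ _ : k ∈ Set.Ico n (a n 1),
          ‖∑ i ∈ Finset.Icc n k, (α i * γ i ^ r) • ξ i ω‖) ⊆
          insert 0 ((fun k => ‖∑ i ∈ Finset.Icc n k, (α i * γ i ^ r) • ξ i ω‖) ''
            (Set.Ico n (a n 1))) := by
        rintro _ ⟨k, rfl⟩
        dsimp only
        by_cases hk : k ∈ Set.Ico n (a n 1)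
        · rw [ciSup_pos hk]
          exact Set.mem_insert_of_mem _ ⟨k, hk, rfl⟩
        · have : IsEmpty (k ∈ Set.Ico n (a n 1)) := ⟨hk⟩
          rw [Real.iSup_of_isEmpty]
          exact Set.mem_insert _ _
      exact ((((Set.finite_Ico n (a n 1)).image _).insert 0).subset hfin).bddAbove
    refine le_trans ?_ (le_ciSup hout k)
    rw [ciSup_pos hmem]
  have hnoise0 : ∀ n, 0 ≤ noise n ω := by
    intro n
    rw [hnoise]
    exact Real.iSup_nonneg fun k => Real.iSup_nonneg fun _ => norm_nonneg _
  have hXi0 : 0 ≤ Xi ω := by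
    rw [hXi]
    exact le_limsup_of_frequently_le (Frequently.of_forall hnoise0) hbdd
  have hBev : ∀ B, Xi ω < B → ∀ᶠ n in atTop, ∀ k, n ≤ k → γ (k + 1) - γ n ≤ 1 →
      ‖∑ i ∈ Finset.Ico n (k + 1), (α i * γ i ^ r) • ξ i ω‖ ≤ B := by
    intro B hB
    rw [hXi] at hB
    filter_upwards [eventually_lt_of_limsup_lt hB hbdd] with n hn k hnk hk
    exact (hnz n k hnk hk).trans hn.le
  -- the step length
  have hL0 : (0 : ℝ) ≤ L := L.2
  obtain ⟨t, ht, ht1, htL⟩ : ∃ t : ℝ, 0 < t ∧ t ≤ 1 ∧ t * L ≤ 1 / 80 := by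
    refine ⟨1 / (80 * (1 + L)), by positivity, ?_, ?_⟩
    · rw [div_le_one (by positivity)]; linarith
    · rw [div_mul_eq_mul_div, div_le_div_iff₀ (by positivity) (by positivity)]; linarith
  have hM0 : 0 < M := by linarith
  have hμ0 : 0 < μ := by linarith
  -- exponents
  have hpv := hphat ω
  rw [← hpdef, ← hμdef] at hpv
  have hminr : ∀ h : μ < 2, 0 < 1 / (2 - μ) := fun h => by
    have : 0 < 2 - μ := by linarith
    positivity
  have hp0 : 0 < p := by
    rw [hpv]
    split_ifs with h
    · exact mul_pos hμ0 (lt_min (by linarith) (hminr h))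
    · exact mul_pos hμ0 (by linarith)
  have hpr : p ≤ μ * r := by
    rw [hpv]
    split_ifs with h
    · exact mul_le_mul_of_nonneg_left (min_le_left _ _) hμ0.le
    · exact le_rfl
  obtain ⟨q, hq0, hqμ, hpq⟩ : ∃ q : ℝ, 0 < q ∧ 2 / μ ≤ 1 + q ∧
      (p * q < 1 ∨ (p * q = 1 ∧ ¬ (μ = 2 ∨ r < 1 / (2 - μ)))) := by
    rcases hμ2.eq_or_lt with h2 | h2
    · refine ⟨1 / (2 * p), by positivity, ?_, Or.inl ?_⟩
      · have : 0 < 1 / (2 * p) := by positivity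
        rw [h2]; norm_num; positivity
      · have : p * (1 / (2 * p)) = 1 / 2 := by field_simp
        rw [this]; norm_num
    · have h3 : 0 < 2 - μ := by linarith
      refine ⟨2 / μ - 1, ?_, by linarith, ?_⟩
      · rw [sub_pos, lt_div_iff₀ hμ0]; linarith
      · rw [if_pos h2] at hpv
        have e : p * (2 / μ - 1) = min r (1 / (2 - μ)) * (2 - μ) := by
          rw [hpv]; field_simp
        rw [e]
        by_cases hcase : r < 1 / (2 - μ)
        · left
          rw [min_eq_left hcase.le]
          rwa [lt_div_iff₀ h3] at hcase
        · right
          rw [min_eq_right (not_lt.1 hcase)]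
          refine ⟨by field_simp, ?_⟩
          rintro (h | h)
          · exact h2.ne h
          · exact hcase h
  have hkey : ∀ B c : ℝ, Xi ω < B → 0 < c →
      (8 / t + 8 * (L : ℝ)) * B ^ 2 ≤ t / 8 * (c / M) ^ (2 / μ) →
      (p * q < 1 ∨ (p * q = 1 ∧ c ^ (-q) * t < q * (t / 8 * (1 / M) ^ (2 / μ)))) →
      ∃ᶠ n in atTop, γ n ^ p * (f (θ n ω) - fhat ω) ≤ c := by
    intro B c hB hc h1 h2
    refine sgl_key hfd (convex_closedBall (0 : EuclideanSpace ℝ (Fin d)) R) hL0 ?_ α hαpos hα0 γ hγ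
      hαdiv (fun n => θ n ω) (fun n => ξ n ω) hxS (fun n => hrec n ω) r B hr (by linarith)
      (hBev B hB) (Qhat ω) (fhat ω) δ μ M hδ0 hδ1 hμ1 hM1 hLj hxQ (hlim δ hδ0) t ht ht1 htL
      p q c hp0 hpr hq0 hqμ hc h1 h2
    intro y hy y' hy'
    have := hL.dist_le_mul y hy y' hy'
    rwa [dist_eq_norm, dist_eq_norm] at this
  have hK0 : 0 < 8 / t + 8 * (L : ℝ) := by positivity
  -- the general bound
  obtain ⟨C, hC⟩ : ∃ C : ℝ, ∀ c, C ≤ c → 0 < c →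
      ∃ᶠ n in atTop, γ n ^ p * (f (θ n ω) - fhat ω) ≤ c := by
    have l1 : Tendsto (fun c : ℝ => t / 8 * (c / M) ^ (2 / μ)) atTop atTop :=
      ((tendsto_rpow_atTop (by positivity)).comp (tendsto_id.atTop_div_const hM0)).const_mul_atTop
        (by positivity)
    have l2 : Tendsto (fun c : ℝ => c ^ (-q) * t) atTop (nhds (0 * t)) :=
      (tendsto_rpow_neg_atTop hq0).mul_const t
    rw [zero_mul] at l2
    have hpos : 0 < q * (t / 8 * (1 / M) ^ (2 / μ)) := by positivity
    obtain ⟨C, hC⟩ := eventually_atTop.1 ((l1.eventually_ge_atTop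
      ((8 / t + 8 * (L : ℝ)) * (Xi ω + 1) ^ 2)).and (l2.eventually_lt_const hpos))
    refine ⟨C, fun c hc hc0 => hkey (Xi ω + 1) c (by linarith) hc0 (hC c hc).1 ?_⟩
    exact hpq.imp id fun h => ⟨h.1, (hC c hc).2⟩
  -- the zero case
  have hzero : (μ = 2 ∨ r < 1 / (2 - μ)) → Xi ω = 0 → ∀ c : ℝ, 0 < c →
      ∃ᶠ n in atTop, γ n ^ p * (f (θ n ω) - fhat ω) ≤ c := by
    intro hcase hX c hc
    have hpos : 0 < t / 8 * (c / M) ^ (2 / μ) / (8 / t + 8 * (L : ℝ)) := by positivity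
    refine hkey (Real.sqrt (t / 8 * (c / M) ^ (2 / μ) / (8 / t + 8 * (L : ℝ)))) c ?_ hc ?_ ?_
    · rw [hX]; exact Real.sqrt_pos.2 hpos
    · rw [Real.sq_sqrt hpos.le, mul_div_cancel₀ _ hK0.ne']
    · exact hpq.imp id fun h => absurd hcase h.2
  have hφ := hφe ω
  rw [← hμdef] at hφ
  set φ0 : ℝ := if μ = 2 ∨ r < 1 / (2 - μ) then Xi ω
        else if r = 1 / (2 - μ) then 1 + Xi ω else 1 with hφ0
  have hφnn : 0 ≤ φ0 := by
    rw [hφ0]; split_ifs <;> linarith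
  rcases hφnn.eq_or_lt with h0 | h0
  · have hcase : (μ = 2 ∨ r < 1 / (2 - μ)) ∧ Xi ω = 0 := by
      by_cases hc : μ = 2 ∨ r < 1 / (2 - μ)
      · rw [hφ0, if_pos hc] at h0
        exact ⟨hc, h0.symm⟩
      · rw [hφ0, if_neg hc] at h0
        split_ifs at h0 <;> linarith
    refine ⟨1, le_rfl, fun ε hε c hc => hzero hcase.1 hcase.2 c (lt_trans ?_ hc)⟩
    rw [hφ]
    have : 0 < (φ0 + ε) ^ μ := Real.rpow_pos_of_pos (by linarith) _
    linarith
  · have hφμ : 0 < φ0 ^ μ := Real.rpow_pos_of_pos h0 _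
    refine ⟨max 1 (C / φ0 ^ μ), le_max_left _ _, fun ε hε c hc => ?_⟩
    rw [hφ] at hc
    have h1 : φ0 ^ μ ≤ (φ0 + ε) ^ μ := Real.rpow_le_rpow h0.le (by linarith) hμ0.le
    have hmax : 1 ≤ max 1 (C / φ0 ^ μ) := le_max_left _ _
    have h2 : max 1 (C / φ0 ^ μ) * φ0 ^ μ ≤ max 1 (C / φ0 ^ μ) * (φ0 + ε) ^ μ := by gcongr
    have h3 : C ≤ max 1 (C / φ0 ^ μ) * φ0 ^ μ := by
      have := mul_le_mul_of_nonneg_right (le_max_right 1 (C / φ0 ^ μ)) hφμ.le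
      rwa [div_mul_cancel₀ _ hφμ.ne'] at this
    have h4 : φ0 ^ μ ≤ max 1 (C / φ0 ^ μ) * φ0 ^ μ := le_mul_of_one_le_left hφμ.le hmax
    exact hC c (by linarith) (by linarith)
end
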